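/- arXiv:1207.5077 — 2 statements merged into one kernel-verified Lean document; each statement's English description precedes it below -/
import Mathlib

section
/- Let p ≥ 2 be an integer and η > 0, set E = η²/4, and let V, (c_k), (φ_k), (γ_k) satisfy all the hypotheses (i)–(vi) of the preceding boundedness lemma: V(x) = Σ_{k=1}^∞ c_k e^{−iφ_k x} γ_k(x) is real-valued; sup_k Var(γ_k,(0,∞)) < ∞; ∫_0^∞ (sup_k |γ_k(x)|)^p dx < ∞; Σ_k |c_k| < ∞; Σ_{k_1,…,k_j} |c_{k_1} ⋯ c_{k_j} h_j(η; φ_{k_1},…,φ_{k_j})| < ∞ for j = 1,…,p−1; Kη ≠ ε_1 φ_{k_1} + ⋯ + ε_J φ_{k_J} for all 1 ≤ K ≤ J ≤ p, all indices and all signs ε_i ∈ {±1}; and the representation is closed under complex conjugation via an involution k ↦ k* with c_{k*} = conj(c_k), φ_{k*} = −φ_k, γ_{k*} = conj(γ_k). Then for every real-valued solution u of −u'' + V u = E u on (0,∞) that is not identically zero, the limit lim_{x→∞} ( u'(x)² + E·u(x)² ) exists and is a finite positive real number. -/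
open scoped BigOperators ENNReal
open MeasureTheory

/-- The functions `h_J` of `1+J` real variables (the extra variables in the `ℕ → ℝ`
argument beyond the first `J` are ignored). -/
noncomputable def hFun : ℕ → ℝ → (ℕ → ℝ) → ℝ
  | 0, _, _ => 1
  | (J+1), η, φ =>
      (η - ∑ i ∈ Finset.range (J+1), φ i)⁻¹ *
        ∑ j ∈ (Finset.range (J+1)).attach,
          hFun j.1 η φ * hFun (J - j.1) η (fun i => φ (i + j.1))
  termination_by J _ _ => J
  decreasing_by
  · exact Nat.lt_of_lt_of_le (Finset.mem_range.mp j.2) (Nat.le_refl _)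
  · exact Nat.lt_succ_of_le (Nat.sub_le J j.1)

/-- Pad a tuple `m : Fin J → ℕ` of indices into a function `ℕ → ℝ` listing `φ_{m_1},…,φ_{m_J}`. -/
noncomputable def padFin (J : ℕ) (φ : ℕ → ℝ) (m : Fin J → ℕ) : ℕ → ℝ :=
  fun n => if h : n < J then φ (m ⟨n, h⟩) else 0

/-- A real-valued solution `u` (with derivative `u'`) of `-u'' + V u = E u` on `(0,∞)`. -/
def IsWeakSolutionReal (V : ℝ → ℝ) (E : ℝ) (u u' : ℝ → ℝ) : Prop :=
  (∀ x ∈ Set.Ioi (0:ℝ), HasDerivAt u (u' x) x) ∧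
  ∀ a b : ℝ, 0 < a → a ≤ b →
    IntervalIntegrable (fun x => V x * u x - E * u x) volume a b ∧
    u' b - u' a = ∫ x in a..b, (V x * u x - E * u x)

theorem exists_monotone_variation (f : ℝ → ℂ) (M : ℝ) (hM : 0 ≤ M)
    (h : eVariationOn f (Set.Ioi 0) ≤ ENNReal.ofReal M) :
    ∃ v : ℝ → ℝ, Monotone v ∧ (∀ x, 0 ≤ v x) ∧ (∀ x, v x ≤ M) ∧
      ∀ x y, 0 < x → x ≤ y → ‖f y - f x‖ ≤ v y - v x := by
  have hfin : ∀ x, eVariationOn f (Set.Ioc 0 x) ≤ ENNReal.ofReal M := fun x =>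
    (eVariationOn.mono f Set.Ioc_subset_Ioi_self).trans h
  have hne : ∀ x, eVariationOn f (Set.Ioc 0 x) ≠ ⊤ := fun x =>
    ((hfin x).trans_lt ENNReal.ofReal_lt_top).ne
  refine ⟨fun x => (eVariationOn f (Set.Ioc 0 x)).toReal, ?_, fun x => ENNReal.toReal_nonneg,
    fun x => ENNReal.toReal_le_of_le_ofReal hM (hfin x), ?_⟩
  · intro x y hxy
    exact ENNReal.toReal_mono (hne y) (eVariationOn.mono f (Set.Ioc_subset_Ioc_right hxy))
  · intro x y hx hxy
    have hu : eVariationOn f (Set.Ioc 0 y)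
        = eVariationOn f (Set.Ioc 0 x) + eVariationOn f (Set.Icc x y) := by
      rw [← eVariationOn.union f (isGreatest_Ioc hx) (isLeast_Icc hxy),
        Set.Ioc_union_Icc_eq_Ioc hx hxy]
    have hle : edist (f y) (f x) ≤ eVariationOn f (Set.Icc x y) :=
      eVariationOn.edist_le f (Set.right_mem_Icc.2 hxy) (Set.left_mem_Icc.2 hxy)
    have h2 : eVariationOn f (Set.Icc x y) ≠ ⊤ := by
      intro h0
      apply hne y
      rw [hu, h0, add_top]
    have h3 := ENNReal.toReal_mono h2 hle
    simp only [hu, ENNReal.toReal_add (hne x) h2]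
    rw [edist_dist, ENNReal.toReal_ofReal dist_nonneg, dist_eq_norm] at h3
    linarith

/-- A function of bounded variation on `(0,∞)` with integrable `p`-th power is dominated, together
with its increments, by a bounded decreasing function that vanishes at infinity. -/
theorem exists_antitone_majorant (f : ℝ → ℂ) (M : ℝ) (hM : 0 ≤ M)
    (h : eVariationOn f (Set.Ioi 0) ≤ ENNReal.ofReal M) (p : ℕ)
    (hp : ∫⁻ x in Set.Ioi (0:ℝ), ‖f x‖ₑ ^ p < ⊤) :
    ∃ w : ℝ → ℝ, Antitone w ∧ Filter.Tendsto w Filter.atTop (nhds 0) ∧ (∀ x, w x ≤ M) ∧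
      (∀ x y, 0 < x → x ≤ y → ‖f y - f x‖ ≤ w x - w y) ∧ ∀ x, 0 < x → ‖f x‖ ≤ w x := by
  obtain ⟨v, hv, hv0, hvM, hvd⟩ := exists_monotone_variation f M hM h
  have hb : BddAbove (Set.range v) := ⟨M, by rintro _ ⟨x, rfl⟩; exact hvM x⟩
  have hlim := tendsto_atTop_ciSup hv hb
  set L := ⨆ x, v x
  have hL : ∀ x, v x ≤ L := fun x => le_ciSup hb x
  have hLM : L ≤ M := ciSup_le hvM
  refine ⟨fun x => L - v x, fun x y hxy => sub_le_sub_left (hv hxy) L, ?_,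
    fun x => by linarith [hv0 x], fun x y hx hxy => by linarith [hvd x y hx hxy], ?_⟩
  · simpa using (tendsto_const_nhds (x := L)).sub hlim
  · intro x hx
    by_contra! hcon
    have hge : ∀ y, x ≤ y → ‖f x‖ - (L - v x) ≤ ‖f y‖ := by
      intro y hy
      have h1 := hvd x y hx hy
      have h2 := norm_sub_norm_le (f x) (f y)
      rw [norm_sub_rev] at h2
      linarith [hL y]
    set ε := ‖f x‖ - (L - v x)
    have hε : 0 < ε := by simp only [ε]; linarith
    have : ∫⁻ y in Set.Ici x, ENNReal.ofReal ε ^ p ≤ ∫⁻ y in Set.Ioi (0:ℝ), ‖f y‖ₑ ^ p := by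
      refine le_trans ?_ (lintegral_mono_set (Set.Ici_subset_Ioi.2 hx))
      refine setLIntegral_mono' measurableSet_Ici fun y hy => ?_
      gcongr
      rw [← ofReal_norm]
      exact ENNReal.ofReal_le_ofReal (hge y hy)
    rw [setLIntegral_const, Real.volume_Ici, ENNReal.mul_top] at this
    · exact absurd hp (not_lt.2 this)
    · exact pow_ne_zero _ (by simpa using hε)

theorem lintegral_antitone_shift_le (w : ℝ → ℝ) (hw : Antitone w)
    (hw0 : Filter.Tendsto w Filter.atTop (nhds 0)) (M : ℝ) (hM : ∀ x, w x ≤ M) :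
    ∫⁻ x in Set.Ioi (0:ℝ), ENNReal.ofReal (w x - w (x + 2)) ≤ ENNReal.ofReal (2 * M) := by
  have hnn : ∀ x, 0 ≤ w x := fun x => hw.le_of_tendsto hw0 x
  have hii : ∀ a b, IntervalIntegrable w volume a b := fun a b => hw.intervalIntegrable
  have hii2 : ∀ a b, IntervalIntegrable (fun x => w (x + 2)) volume a b := fun a b =>
    (hw.comp_monotone (fun x y h => by linarith : Monotone fun x : ℝ => x + 2)).intervalIntegrable
  have hint : ∀ R : ℝ, 0 ≤ R → ∫ x in (0:ℝ)..R, (w x - w (x + 2)) ≤ 2 * M := by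
    intro R hR
    rw [intervalIntegral.integral_sub (hii _ _) (hii2 _ _),
      intervalIntegral.integral_comp_add_right]
    have e1 := intervalIntegral.integral_add_adjacent_intervals (hii 0 2) (hii 2 (R + 2))
    have e2 := intervalIntegral.integral_add_adjacent_intervals (hii 0 R) (hii R (R + 2))
    have e3 : 0 ≤ ∫ x in R..(R + 2), w x :=
      intervalIntegral.integral_nonneg (by linarith) fun x _ => hnn x
    have e4 : ∫ x in (0:ℝ)..2, w x ≤ ∫ x in (0:ℝ)..2, M :=
      intervalIntegral.integral_mono_on (by norm_num) (hii _ _) (by simp) fun x _ => hM x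
    rw [intervalIntegral.integral_const, smul_eq_mul] at e4
    simp only [zero_add]
    linarith
  have hd : ∀ x, 0 ≤ w x - w (x + 2) := fun x => sub_nonneg.2 (hw (by linarith))
  have hI : IntegrableOn (fun x => w x - w (x + 2)) (Set.Ioi 0) := by
    refine integrableOn_Ioi_of_intervalIntegral_norm_bounded (2 * M) 0
      (l := Filter.atTop) (b := fun R : ℝ => R) (fun R => ?_) Filter.tendsto_id ?_
    · rcases le_total 0 R with h | h
      · exact (intervalIntegrable_iff_integrableOn_Ioc_of_le h).1 ((hii 0 R).sub (hii2 0 R))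
      · simp [Set.Ioc_eq_empty_of_le h]
    · filter_upwards [Filter.eventually_ge_atTop 0] with R hR
      simpa only [Real.norm_of_nonneg (hd _)] using hint R hR
  rw [← ofReal_integral_eq_lintegral_ofReal hI (Filter.Eventually.of_forall hd)]
  refine ENNReal.ofReal_le_ofReal ?_
  refine le_of_tendsto (intervalIntegral_tendsto_integral_Ioi 0 hI Filter.tendsto_id) ?_
  filter_upwards [Filter.eventually_ge_atTop 0] with R hR using hint R hR

/-- Control of the increments by a monotone function forces continuity off a countable set. -/
theorem continuousAt_of_antitone_majorant (f : ℝ → ℂ) (w : ℝ → ℝ)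
    (hd : ∀ x y, 0 < x → x ≤ y → ‖f y - f x‖ ≤ w x - w y) (x : ℝ) (hx : 0 < x)
    (hc : ContinuousAt w x) : ContinuousAt f x := by
  rw [ContinuousAt, tendsto_iff_norm_sub_tendsto_zero]
  have h0 : Filter.Tendsto (fun y => |w y - w x|) (nhds x) (nhds 0) := by
    have := (tendsto_iff_norm_sub_tendsto_zero).1 hc
    simpa using this
  refine squeeze_zero' (Filter.Eventually.of_forall fun y => norm_nonneg _) ?_ h0
  filter_upwards [eventually_gt_nhds hx] with y hy
  rcases le_total x y with h | h
  · refine (hd x y hx h).trans ?_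
    rw [abs_sub_comm]
    exact le_abs_self _
  · rw [norm_sub_rev]
    exact (hd y x hy h).trans (le_abs_self _)

/-- The moving average of a function over intervals of length one. -/
noncomputable def movingAverage (f : ℝ → ℂ) (x : ℝ) : ℂ := ∫ t in (0:ℝ)..1, f (x + t)

theorem movingAverage_eq (f : ℝ → ℂ) (x : ℝ) : movingAverage f x = ∫ t in x..(x + 1), f t := by
  simp [movingAverage, intervalIntegral.integral_comp_add_left]

theorem intervalIntegrable_of_bounded {f : ℝ → ℂ} (hf : Measurable f) {M : ℝ}
    (hM : ∀ x, ‖f x‖ ≤ M) (a b : ℝ) : IntervalIntegrable f volume a b :=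
  (intervalIntegrable_const (c := M)).mono_fun hf.aestronglyMeasurable
    (Filter.Eventually.of_forall fun x => (hM x).trans (le_abs_self M))

theorem norm_movingAverage_sub_le {f : ℝ → ℂ} (hf : Measurable f) {M : ℝ}
    (hM : ∀ x, ‖f x‖ ≤ M) (x : ℝ) (z : ℂ) (C : ℝ)
    (h : ∀ t, 0 < t → t ≤ 1 → ‖f (x + t) - z‖ ≤ C) : ‖movingAverage f x - z‖ ≤ C := by
  have e : movingAverage f x - z = ∫ t in (0:ℝ)..1, (f (x + t) - z) := by
    rw [intervalIntegral.integral_sub]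
    · simp [movingAverage]
    · exact intervalIntegrable_of_bounded (hf.comp (measurable_const_add x)) (fun t => hM _) _ _
    · simp
  rw [e]
  have := intervalIntegral.norm_integral_le_of_norm_le_const (a := 0) (b := 1)
    (f := fun t => f (x + t) - z) (C := C) (fun t ht => by
      rw [Set.uIoc_of_le zero_le_one] at ht
      exact h t ht.1 ht.2)
  simpa using this

theorem norm_movingAverage_le {f : ℝ → ℂ} (hf : Measurable f) {M : ℝ}
    (hM : ∀ x, ‖f x‖ ≤ M) (x : ℝ) : ‖movingAverage f x‖ ≤ M := by
  simpa using norm_movingAverage_sub_le hf hM x 0 M fun t _ _ => by simpa using hM (x + t)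

theorem continuous_movingAverage {f : ℝ → ℂ} (hf : Measurable f) {M : ℝ}
    (hM : ∀ x, ‖f x‖ ≤ M) : Continuous (movingAverage f) := by
  have hi := intervalIntegrable_of_bounded hf hM
  have hc := intervalIntegral.continuous_primitive hi 0
  have e : movingAverage f = fun x => (∫ t in (0:ℝ)..(x + 1), f t) - ∫ t in (0:ℝ)..x, f t := by
    funext x
    rw [movingAverage_eq, intervalIntegral.integral_interval_sub_left (hi _ _) (hi _ _)]
  rw [e]
  exact (hc.comp (continuous_add_const 1)).sub hc

theorem hasDerivAt_movingAverage {f : ℝ → ℂ} (hf : Continuous f) (x : ℝ) :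
    HasDerivAt (movingAverage f) (f (x + 1) - f x) x := by
  have e : movingAverage f = fun x => (∫ t in (0:ℝ)..(x + 1), f t) - ∫ t in (0:ℝ)..x, f t := by
    funext x
    rw [movingAverage_eq, intervalIntegral.integral_interval_sub_left
      (hf.intervalIntegrable _ _) (hf.intervalIntegrable _ _)]
  rw [e]
  have h1 : ∀ y, HasDerivAt (fun y => ∫ t in (0:ℝ)..y, f t) (f y) y := fun y =>
    intervalIntegral.integral_hasDerivAt_right (hf.intervalIntegrable _ _)
      hf.aestronglyMeasurable.stronglyMeasurableAtFilter hf.continuousAt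
  exact ((h1 (x + 1)).comp_add_const x 1).sub (h1 x)

/-- The moving average of a nonnegative extended real function. -/
noncomputable def lmovingAverage (F : ℝ → ℝ≥0∞) (x : ℝ) : ℝ≥0∞ :=
  ∫⁻ t in Set.Ioc (0:ℝ) 1, F (x + t)

theorem measurable_lmovingAverage {F : ℝ → ℝ≥0∞} (hF : Measurable F) :
    Measurable (lmovingAverage F) :=
  Measurable.lintegral_prod_right' (f := fun z : ℝ × ℝ => F (z.1 + z.2))
    (hF.comp (measurable_fst.add measurable_snd))

theorem lmovingAverage_mono {F G : ℝ → ℝ≥0∞} (h : ∀ x, F x ≤ G x) (x : ℝ) :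
    lmovingAverage F x ≤ lmovingAverage G x := lintegral_mono fun t => h (x + t)

theorem enorm_movingAverage_le (f : ℝ → ℂ) (x : ℝ) :
    ‖movingAverage f x‖ₑ ≤ lmovingAverage (fun y => ‖f y‖ₑ) x := by
  rw [movingAverage, intervalIntegral.integral_of_le zero_le_one]
  exact enorm_integral_le_lintegral_enorm _

theorem lmovingAverage_pow_le {F : ℝ → ℝ≥0∞} (hF : Measurable F) {p : ℕ} (hp : 1 ≤ p) (x : ℝ) :
    lmovingAverage F x ^ p ≤ lmovingAverage (fun y => F y ^ p) x := by
  have : IsProbabilityMeasure (volume.restrict (Set.Ioc (0:ℝ) 1)) := ⟨by simp⟩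
  have hm : AEStronglyMeasurable (fun t => F (x + t)) (volume.restrict (Set.Ioc (0:ℝ) 1)) :=
    (hF.comp (measurable_const_add x)).aestronglyMeasurable
  have h := eLpNorm_le_eLpNorm_of_exponent_le (p := 1) (q := p) (by exact_mod_cast hp) hm
  have hp0 : (p : ℝ) ≠ 0 := by positivity
  rw [eLpNorm_one_eq_lintegral_enorm, eLpNorm_eq_lintegral_rpow_enorm_toReal
    (by positivity) (by simp)] at h
  simp only [enorm_eq_self, ENNReal.toReal_natCast, ENNReal.rpow_natCast] at h
  refine (pow_le_pow_left₀ zero_le h p).trans ?_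
  rw [← ENNReal.rpow_natCast, ← ENNReal.rpow_mul, one_div, inv_mul_cancel₀ hp0, ENNReal.rpow_one]
  rfl

theorem lintegral_lmovingAverage_pow_le {F : ℝ → ℝ≥0∞} (hF : Measurable F) {p : ℕ} (hp : 1 ≤ p) :
    ∫⁻ x in Set.Ioi (0:ℝ), lmovingAverage F x ^ p ≤ ∫⁻ x in Set.Ioi (0:ℝ), F x ^ p := by
  calc ∫⁻ x in Set.Ioi (0:ℝ), lmovingAverage F x ^ p
      ≤ ∫⁻ x in Set.Ioi (0:ℝ), ∫⁻ t in Set.Ioc (0:ℝ) 1, F (x + t) ^ p :=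
        lintegral_mono fun x => lmovingAverage_pow_le hF hp x
    _ = ∫⁻ t in Set.Ioc (0:ℝ) 1, ∫⁻ x in Set.Ioi (0:ℝ), F (x + t) ^ p := by
        refine lintegral_lintegral_swap (Measurable.aemeasurable ?_)
        exact (hF.comp (measurable_fst.add measurable_snd)).pow_const p
    _ ≤ ∫⁻ t in Set.Ioc (0:ℝ) 1, ∫⁻ x in Set.Ioi (0:ℝ), F x ^ p := by
        refine setLIntegral_mono' measurableSet_Ioc fun t ht => ?_
        rw [← lintegral_indicator measurableSet_Ioi, ← lintegral_indicator measurableSet_Ioi,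
          ← lintegral_add_right_eq_self (μ := volume) ((Set.Ioi (0:ℝ)).indicator fun x => F x ^ p) t]
        refine lintegral_mono fun x => ?_
        by_cases hx : 0 < x
        · have : 0 < x + t := add_pos hx ht.1
          simp [Set.indicator, hx, this]
        · simp [Set.indicator, hx]
    _ = ∫⁻ x in Set.Ioi (0:ℝ), F x ^ p := by simp

/-- A bounded measurable function whose increments on `(0,∞)` are dominated by a decreasing
function `w` has a continuously differentiable approximation with error controlled by `w`. -/
theorem exists_smooth_approx (f : ℝ → ℂ) (hf : Measurable f) (M : ℝ) (hM : ∀ x, ‖f x‖ ≤ M)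
    (w : ℝ → ℝ) (hw : Antitone w)
    (hd : ∀ x y, 0 < x → x ≤ y → ‖f y - f x‖ ≤ w x - w y) (hfw : ∀ x, 0 < x → ‖f x‖ ≤ w x) :
    ∃ g g' : ℝ → ℂ, (∀ x, HasDerivAt g (g' x) x) ∧ (∀ x, ‖g x‖ ≤ M) ∧
      (∀ x, ‖g' x‖ ≤ 2 * M) ∧ (∀ x, 0 < x → ‖g x - f x‖ ≤ w x - w (x + 2)) ∧
      (∀ x, 0 < x → ‖g' x‖ ≤ w x - w (x + 2)) ∧ (∀ x, 0 < x → ‖g x‖ ≤ w x) ∧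
      ∀ x, ‖g x‖ₑ ≤ lmovingAverage (lmovingAverage fun y => ‖f y‖ₑ) x := by
  have hc := continuous_movingAverage hf hM
  have hb := norm_movingAverage_le hf hM
  refine ⟨movingAverage (movingAverage f),
    fun x => movingAverage f (x + 1) - movingAverage f x, hasDerivAt_movingAverage hc,
    norm_movingAverage_le hc.measurable hb,
    fun x => ?_, fun x hx => ?_, fun x hx => ?_, fun x hx => ?_, fun x => ?_⟩
  · refine (norm_sub_le _ _).trans ?_
    linarith [hb (x + 1), hb x]
  · refine norm_movingAverage_sub_le hc.measurable hb x _ _ fun t ht ht1 => ?_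
    refine norm_movingAverage_sub_le hf hM _ _ _ fun s hs hs1 => ?_
    refine (hd x _ hx (by linarith)).trans ?_
    have := hw (show x + t + s ≤ x + 2 by linarith)
    linarith
  · refine norm_movingAverage_sub_le hf hM _ _ _ fun t ht ht1 => ?_
    rw [norm_sub_rev]
    refine norm_movingAverage_sub_le hf hM _ _ _ fun s hs hs1 => ?_
    rw [norm_sub_rev]
    refine (hd _ _ (by linarith) (show x + s ≤ x + 1 + t by linarith)).trans ?_
    have := hw (show x + 1 + t ≤ x + 2 by linarith)
    have := hw (show x ≤ x + s by linarith)
    linarith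
  · have := norm_movingAverage_sub_le hc.measurable hb x 0 (w x) fun t ht ht1 => by
      refine norm_movingAverage_sub_le hf hM _ _ _ fun s hs hs1 => ?_
      rw [sub_zero]
      exact (hfw _ (by linarith)).trans (hw (by linarith))
    simpa using this
  · exact (enorm_movingAverage_le _ x).trans (lmovingAverage_mono (enorm_movingAverage_le f) x)

/-- A nonnegative function whose logarithmic derivative is bounded (off a countable set) stays
positive. -/
theorem pos_of_hasDerivAt_mul (F θ : ℝ → ℝ) (S : Set ℝ) (hS : S.Countable) (a b K : ℝ)
    (hab : a ≤ b) (hF : ContinuousOn F (Set.Icc a b))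
    (hd : ∀ x ∈ Set.Ioo a b, x ∉ S → HasDerivAt F (θ x) x)
    (hθ : IntervalIntegrable θ volume a b) (hK : ∀ x ∈ Set.Icc a b, |θ x| ≤ K * F x)
    (ha : 0 < F a) : 0 < F b := by
  have hE : ∀ x, HasDerivAt (fun y => Real.exp (K * y)) (Real.exp (K * x) * K) x := fun x => by
    simpa using ((hasDerivAt_id x).const_mul K).exp
  have hEc : Continuous fun y => Real.exp (K * y) := by fun_prop
  have hint := integral_eq_of_hasDerivAt_off_countable_of_le
    (fun x => F x * Real.exp (K * x))
    (fun x => θ x * Real.exp (K * x) + F x * (Real.exp (K * x) * K)) hab hS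
    (hF.mul hEc.continuousOn) (fun x hx => (hd x hx.1 hx.2).mul (hE x))
    ((hθ.mul_continuousOn hEc.continuousOn).add (ContinuousOn.intervalIntegrable (by
      rw [Set.uIcc_of_le hab]
      exact hF.mul (by fun_prop))))
  have hnn : 0 ≤ ∫ x in a..b, (θ x * Real.exp (K * x) + F x * (Real.exp (K * x) * K)) := by
    refine intervalIntegral.integral_nonneg hab fun x hx => ?_
    have h1 := neg_le_of_abs_le (hK x hx)
    have h2 := Real.exp_pos (K * x)
    nlinarith
  have h3 : 0 < F a * Real.exp (K * a) := mul_pos ha (Real.exp_pos _)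
  have h4 : 0 < F b * Real.exp (K * b) := by linarith
  exact pos_of_mul_pos_left h4 (Real.exp_pos _).le

/-- A positive function with integrable logarithmic derivative has a positive limit. -/
theorem exists_pos_limit (F θ κ : ℝ → ℝ) (S : Set ℝ) (hS : S.Countable) (a : ℝ)
    (hF : ContinuousOn F (Set.Ici a)) (hF0 : ∀ x, a ≤ x → 0 < F x)
    (hd : ∀ x, a < x → x ∉ S → HasDerivAt F (θ x) x)
    (hθ : AEStronglyMeasurable θ (volume.restrict (Set.Ioi a)))
    (hκ : IntegrableOn κ (Set.Ioi a)) (hb : ∀ x, a ≤ x → |θ x| ≤ κ x * F x) :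
    ∃ L, 0 < L ∧ Filter.Tendsto F Filter.atTop (nhds L) := by
  have hI : IntegrableOn (fun x => θ x / F x) (Set.Ioi a) := by
    refine Integrable.mono' hκ ?_ ?_
    · exact hθ.div₀ ((hF.mono Set.Ioi_subset_Ici_self).aestronglyMeasurable measurableSet_Ioi)
    · refine (ae_restrict_iff' measurableSet_Ioi).2 (Filter.Eventually.of_forall fun x hx => ?_)
      have hx' : a ≤ x := le_of_lt hx
      rw [norm_div, Real.norm_eq_abs, Real.norm_of_nonneg (hF0 x hx').le, div_le_iff₀ (hF0 x hx')]
      exact hb x hx'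
  have hlog : ∀ x, a ≤ x → ∫ t in a..x, θ t / F t = Real.log (F x) - Real.log (F a) := by
    intro x hx
    refine integral_eq_of_hasDerivAt_off_countable_of_le (fun t => Real.log (F t)) _ hx hS
      ?_ ?_ ?_
    · exact ContinuousOn.log (hF.mono Set.Icc_subset_Ici_self) fun t ht => (hF0 t ht.1).ne'
    · exact fun t ht => (hd t ht.1.1 ht.2).log (hF0 t ht.1.1.le).ne'
    · rw [intervalIntegrable_iff_integrableOn_Ioc_of_le hx]
      exact hI.mono_set Set.Ioc_subset_Ioi_self
  have ht := intervalIntegral_tendsto_integral_Ioi a hI Filter.tendsto_id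
  refine ⟨F a * Real.exp (∫ x in Set.Ioi a, θ x / F x),
    mul_pos (hF0 a le_rfl) (Real.exp_pos _), ?_⟩
  refine ((Real.continuous_exp.tendsto _).comp ht |>.const_mul (F a)).congr' ?_
  filter_upwards [Filter.eventually_ge_atTop a] with x hx
  simp only [Function.comp, id]
  rw [hlog x hx, Real.exp_sub, Real.exp_log (hF0 x hx), Real.exp_log (hF0 a le_rfl)]
  field_simp [(hF0 a le_rfl).ne']

/-- The derivative of the invariant `|y|² / N` attached to an approximate solution `a + ib` of the
Riccati equation, in real coordinates. -/
theorem riccati_invariant_identity (V η a b r s u v : ℝ) (hη : η ≠ 0) :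
    (2 * (a * v - b * η * u / 2) *
        ((r + η * b - V / η * (2 * a * b)) * v + a * (V * u - η ^ 2 / 4 * u)
          - ((s - η * (a - 1) + V / η * (a ^ 2 - b ^ 2)) * η * u / 2 + b * η * v / 2))
      + 2 * (b * v + a * η * u / 2 - η * u) *
        ((s - η * (a - 1) + V / η * (a ^ 2 - b ^ 2)) * v + b * (V * u - η ^ 2 / 4 * u)
          + ((r + η * b - V / η * (2 * a * b)) * η * u / 2 + a * η * v / 2) - η * v))
        * (1 - (1 - a) ^ 2 - b ^ 2)
      - ((a * v - b * η * u / 2) ^ 2 + (b * v + a * η * u / 2 - η * u) ^ 2)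
        * (2 * (1 - a) * (r + η * b - V / η * (2 * a * b))
          - 2 * b * (s - η * (a - 1) + V / η * (a ^ 2 - b ^ 2)))
    = 2 * (1 - (1 - a) ^ 2 - b ^ 2) *
        ((a * v - b * η * u / 2) * (r * v - s * (η * u / 2))
          + (b * v + a * η * u / 2 - η * u) * (s * v + r * (η * u / 2)))
      - 2 * ((a * v - b * η * u / 2) ^ 2 + (b * v + a * η * u / 2 - η * u) ^ 2)
        * ((1 - a) * r - b * s) := by
  field_simp
  ring

theorem riccati_norm_sub_le (η : ℝ) (g : ℂ) (u v : ℝ) :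
    |√((g.re * v - g.im * η * u / 2) ^ 2 + (g.im * v + g.re * η * u / 2 - η * u) ^ 2)
        - √(v ^ 2 + η ^ 2 / 4 * u ^ 2)| ≤ ‖1 - g‖ * √(v ^ 2 + η ^ 2 / 4 * u ^ 2) := by
  set A : ℂ := ⟨v, η * u / 2⟩ with hA
  have h1 : √(v ^ 2 + η ^ 2 / 4 * u ^ 2) = ‖A‖ := by
    rw [Complex.norm_def, Complex.normSq_apply]
    congr 1
    simp only [hA]
    ring
  have h2 : √((g.re * v - g.im * η * u / 2) ^ 2 + (g.im * v + g.re * η * u / 2 - η * u) ^ 2)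
      = ‖(starRingEnd ℂ) A - (1 - g) * A‖ := by
    rw [Complex.norm_def, Complex.normSq_apply]
    congr 1
    simp [hA]
    ring
  rw [h1, h2]
  have := abs_norm_sub_norm_le ((starRingEnd ℂ) A - (1 - g) * A) ((starRingEnd ℂ) A)
  rwa [Complex.norm_conj, sub_sub_cancel_left, norm_neg, norm_mul] at this

theorem riccati_error_bound (η a b r s u v ρ Y : ℝ) (hρ : 0 ≤ ρ) (hρ2 : r ^ 2 + s ^ 2 = ρ ^ 2)
    (hg : (1 - a) ^ 2 + b ^ 2 ≤ 1 / 4)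
    (hY : Y = (a * v - b * η * u / 2) ^ 2 + (b * v + a * η * u / 2 - η * u) ^ 2)
    (hA : v ^ 2 + η ^ 2 / 4 * u ^ 2 ≤ 4 * Y) :
    |(2 * (1 - (1 - a) ^ 2 - b ^ 2) *
        ((a * v - b * η * u / 2) * (r * v - s * (η * u / 2))
          + (b * v + a * η * u / 2 - η * u) * (s * v + r * (η * u / 2)))
      - 2 * Y * ((1 - a) * r - b * s)) / (1 - (1 - a) ^ 2 - b ^ 2) ^ 2|
      ≤ 6 * ρ * (Y / (1 - (1 - a) ^ 2 - b ^ 2)) := by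
  have hY0 : 0 ≤ Y := by rw [hY]; positivity
  set N := 1 - (1 - a) ^ 2 - b ^ 2 with hN
  have hN34 : 3 / 4 ≤ N := by linarith
  have hN0 : 0 < N := by linarith
  set X := (a * v - b * η * u / 2) * (r * v - s * (η * u / 2))
          + (b * v + a * η * u / 2 - η * u) * (s * v + r * (η * u / 2)) with hX
  have hXb : |X| ≤ 2 * Y * ρ := by
    refine abs_le_of_sq_le_sq ?_ (by positivity)
    have h1 : X ^ 2 ≤ Y * ((r * v - s * (η * u / 2)) ^ 2 + (s * v + r * (η * u / 2)) ^ 2) := by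
      rw [hY, hX]
      nlinarith [sq_nonneg ((a * v - b * η * u / 2) * (s * v + r * (η * u / 2))
        - (b * v + a * η * u / 2 - η * u) * (r * v - s * (η * u / 2)))]
    have h2 : (r * v - s * (η * u / 2)) ^ 2 + (s * v + r * (η * u / 2)) ^ 2
        = ρ ^ 2 * (v ^ 2 + η ^ 2 / 4 * u ^ 2) := by
      rw [← hρ2]; ring
    rw [h2] at h1
    calc X ^ 2 ≤ Y * (ρ ^ 2 * (v ^ 2 + η ^ 2 / 4 * u ^ 2)) := h1
      _ ≤ Y * (ρ ^ 2 * (4 * Y)) := by gcongr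
      _ = (2 * Y * ρ) ^ 2 := by ring
  have hWb : |(1 - a) * r - b * s| ≤ ρ / 2 := by
    refine abs_le_of_sq_le_sq ?_ (by positivity)
    nlinarith [sq_nonneg ((1 - a) * s + b * r), mul_le_mul_of_nonneg_right hg (sq_nonneg ρ)]
  rw [abs_div, abs_of_pos (pow_pos hN0 2), div_le_iff₀ (pow_pos hN0 2)]
  have h3 : 6 * ρ * (Y / N) * N ^ 2 = 6 * ρ * Y * N := by field_simp
  rw [h3]
  calc |2 * N * X - 2 * Y * ((1 - a) * r - b * s)|
      ≤ |2 * N * X| + |2 * Y * ((1 - a) * r - b * s)| := abs_sub _ _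
    _ = 2 * N * |X| + 2 * Y * |(1 - a) * r - b * s| := by
        rw [abs_mul, abs_mul (2 * Y), abs_of_pos (by positivity : 0 < 2 * N),
          abs_of_nonneg (by positivity : 0 ≤ 2 * Y)]
    _ ≤ 2 * N * (2 * Y * ρ) + 2 * Y * (ρ / 2) := by gcongr
    _ ≤ 6 * ρ * Y * N := by nlinarith [mul_nonneg hρ hY0]

/-- If the Riccati equation of a Schrödinger operator at energy `η ^ 2 / 4` has an approximate
solution with integrable error, then the amplitude of every nontrivial solution converges to a
positive limit. -/
theorem exists_limit_of_approx_riccati (V : ℝ → ℝ) (S : Set ℝ) (hS : S.Countable) (K η : ℝ)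
    (hη : 0 < η) (g g' : ℝ → ℂ) (u u' : ℝ → ℝ) (hVm : Measurable V)
    (hVb : ∀ x, 0 < x → |V x| ≤ K)
    (hu : ∀ x, 0 < x → HasDerivAt u (u' x) x) (hu'c : ContinuousOn u' (Set.Ioi 0))
    (hu' : ∀ x, 0 < x → x ∉ S → HasDerivAt u' (V x * u x - η ^ 2 / 4 * u x) x)
    (hg : ∀ x, HasDerivAt g (g' x) x)
    (hg1 : Filter.Tendsto g Filter.atTop (nhds 1))
    (hρ : IntegrableOn (fun x => g' x + Complex.I * η * (g x - 1)
      - Complex.I * V x / η * g x ^ 2) (Set.Ioi 0))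
    (hne : ∃ x ∈ Set.Ioi (0:ℝ), u x ≠ 0) :
    ∃ L : ℝ, 0 < L ∧
      Filter.Tendsto (fun x => u' x ^ 2 + (η ^ 2 / 4) * u x ^ 2) Filter.atTop (nhds L) := by
  obtain ⟨x₁, hx₁, hux₁⟩ := hne
  have hx₁' : 0 < x₁ := hx₁
  have huc : ContinuousOn u (Set.Ioi 0) := fun x hx => (hu x hx).continuousAt.continuousWithinAt
  have hgc : Continuous g := continuous_iff_continuousAt.2 fun x => (hg x).continuousAt
  set R : ℝ → ℝ := fun x => u' x ^ 2 + (η ^ 2 / 4) * u x ^ 2 with hR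
  have hRc : ContinuousOn R (Set.Ioi 0) := (hu'c.pow 2).add ((huc.pow 2).const_smul (η ^ 2 / 4))
  have hRpos : ∀ x, x₁ ≤ x → 0 < R x := by
    intro x hx
    have hsub : Set.Icc x₁ x ⊆ Set.Ioi 0 := fun t ht => lt_of_lt_of_le hx₁' ht.1
    have hi : IntervalIntegrable V volume x₁ x := by
      refine (intervalIntegrable_const (c := K)).mono_fun hVm.aestronglyMeasurable ?_
      refine (ae_restrict_iff' measurableSet_uIoc).2 (Filter.Eventually.of_forall fun t ht => ?_)
      rw [Set.uIoc_of_le hx] at ht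
      exact (hVb t (hx₁'.trans ht.1)).trans (le_abs_self K)
    refine pos_of_hasDerivAt_mul R (fun x => V x * (2 * u' x * u x)) S hS x₁ x (2 * K / η) hx
      (hRc.mono hsub) (fun t ht hts => ?_) ?_ ?_ ?_
    · have ht0 : 0 < t := hx₁'.trans ht.1
      refine (((hu' t ht0 hts).pow 2).add (((hu t ht0).pow 2).const_mul (η ^ 2 / 4))).congr_deriv ?_
      simp only [Nat.cast_ofNat, Nat.add_one_sub_one, pow_one]
      ring
    · refine hi.mul_continuousOn ?_
      rw [Set.uIcc_of_le hx]
      exact ((hu'c.mono hsub).const_smul (2:ℝ)).mul (huc.mono hsub)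
    · intro t ht
      have ht0 : 0 < t := hsub ht
      have hK := hVb t ht0
      have hK0 : 0 ≤ K := (abs_nonneg _).trans hK
      have h1 : |2 * u' t * u t| ≤ 2 / η * R t := by
        have h0 : |2 * u' t * u t| * η = |2 * u' t * u t * η| := by rw [abs_mul _ η, abs_of_pos hη]
        rw [div_mul_eq_mul_div, le_div_iff₀ hη, h0, abs_le]
        simp only [hR]
        constructor
        · nlinarith [sq_nonneg (u' t + η / 2 * u t), sq_nonneg (u' t), sq_nonneg (η * u t)]
        · nlinarith [sq_nonneg (u' t - η / 2 * u t), sq_nonneg (u' t), sq_nonneg (η * u t)]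
      calc |V t * (2 * u' t * u t)| = |V t| * |2 * u' t * u t| := abs_mul _ _
        _ ≤ K * (2 / η * R t) := by gcongr
        _ = 2 * K / η * R t := by ring
    · have : 0 < u x₁ ^ 2 := by positivity
      simp only [hR]
      positivity
  obtain ⟨x₂, hx₂⟩ : ∃ x₂, ∀ x, x₂ ≤ x → ‖1 - g x‖ ≤ 1 / 2 := by
    have h0 : Filter.Tendsto (fun x => ‖1 - g x‖) Filter.atTop (nhds 0) := by
      simpa using (hg1.const_sub 1).norm
    exact Filter.eventually_atTop.1 (h0.eventually_le_const (by norm_num))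
  set a := max x₁ x₂ with ha
  have ha0 : 0 < a := lt_of_lt_of_le hx₁' (le_max_left _ _)
  set N : ℝ → ℝ := fun x => 1 - (1 - (g x).re) ^ 2 - (g x).im ^ 2 with hN
  set Y : ℝ → ℝ := fun x => ((g x).re * u' x - (g x).im * η * u x / 2) ^ 2
    + ((g x).im * u' x + (g x).re * η * u x / 2 - η * u x) ^ 2 with hY
  set ρ : ℝ → ℂ := fun x => g' x + Complex.I * η * (g x - 1)
      - Complex.I * V x / η * g x ^ 2 with hρdef
  have hsmall : ∀ x, a ≤ x → (1 - (g x).re) ^ 2 + (g x).im ^ 2 ≤ 1 / 4 := by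
    intro x hx
    have h1 := hx₂ x ((le_max_right _ _).trans hx)
    have h2 : ‖1 - g x‖ ^ 2 = (1 - (g x).re) ^ 2 + (g x).im ^ 2 := by
      rw [← Complex.normSq_eq_norm_sq, Complex.normSq_apply]
      simp
      ring
    rw [← h2]
    nlinarith [norm_nonneg (1 - g x)]
  have hNpos : ∀ x, a ≤ x → 3 / 4 ≤ N x := fun x hx => by
    have := hsmall x hx
    simp only [hN]
    linarith
  have hsqrt : ∀ x, |√(Y x) - √(R x)| ≤ ‖1 - g x‖ * √(R x) := fun x =>
    riccati_norm_sub_le η (g x) (u x) (u' x)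
  have hY0 : ∀ x, 0 ≤ Y x := fun x => by simp only [hY]; positivity
  have hR0 : ∀ x, 0 ≤ R x := fun x => by simp only [hR]; positivity
  have hRY' : ∀ x, a ≤ x → √(R x) ≤ 2 * √(Y x) := by
    intro x hx
    have h1 := hx₂ x ((le_max_right _ _).trans hx)
    have h2 := neg_le_of_abs_le (hsqrt x)
    nlinarith [Real.sqrt_nonneg (R x)]
  have hRY : ∀ x, a ≤ x → R x ≤ 4 * Y x := by
    intro x hx
    have := hRY' x hx
    nlinarith [Real.sq_sqrt (hR0 x), Real.sq_sqrt (hY0 x), Real.sqrt_nonneg (R x)]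
  have hre : ∀ x, HasDerivAt (fun t => (g t).re) (g' x).re x := fun x =>
    (Complex.reCLM.hasFDerivAt.comp_hasDerivAt x (hg x))
  have him : ∀ x, HasDerivAt (fun t => (g t).im) (g' x).im x := fun x =>
    (Complex.imCLM.hasFDerivAt.comp_hasDerivAt x (hg x))
  have hgre : ∀ x, (g' x).re
      = (ρ x).re + η * (g x).im - V x / η * (2 * (g x).re * (g x).im) := fun x => by
    simp [hρdef, pow_two, Complex.div_re, Complex.div_im]
    field_simp
    ring
  have hgim : ∀ x, (g' x).im
      = (ρ x).im - η * ((g x).re - 1) + V x / η * ((g x).re ^ 2 - (g x).im ^ 2) := fun x => by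
    simp [hρdef, pow_two, Complex.div_re, Complex.div_im]
    field_simp
    ring
  set T : ℝ → ℝ := fun x => (2 * N x *
        (((g x).re * u' x - (g x).im * η * u x / 2)
            * ((ρ x).re * u' x - (ρ x).im * (η * u x / 2))
          + ((g x).im * u' x + (g x).re * η * u x / 2 - η * u x)
            * ((ρ x).im * u' x + (ρ x).re * (η * u x / 2)))
      - 2 * Y x * ((1 - (g x).re) * (ρ x).re - (g x).im * (ρ x).im)) / N x ^ 2 with hT
  have hsub : Set.Ici a ⊆ Set.Ioi 0 := fun t ht => lt_of_lt_of_le ha0 ht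
  have hsub' : Set.Ioi a ⊆ Set.Ioi 0 := Set.Ioi_subset_Ioi ha0.le
  have hrec : Continuous fun x => (g x).re := Complex.continuous_re.comp hgc
  have himc : Continuous fun x => (g x).im := Complex.continuous_im.comp hgc
  have hNc : Continuous N := by fun_prop
  have hYc : ContinuousOn Y (Set.Ioi 0) := by
    have h1 := hrec.continuousOn (s := Set.Ioi 0)
    have h2 := himc.continuousOn (s := Set.Ioi 0)
    fun_prop
  have hum : AEStronglyMeasurable u (volume.restrict (Set.Ioi a)) :=
    (huc.mono hsub').aestronglyMeasurable measurableSet_Ioi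
  have hu'm : AEStronglyMeasurable u' (volume.restrict (Set.Ioi a)) :=
    (hu'c.mono hsub').aestronglyMeasurable measurableSet_Ioi
  obtain ⟨L, hL, hlim⟩ := exists_pos_limit (fun x => Y x / N x) T (fun x => 6 * ‖ρ x‖) S hS a
    ((hYc.mono hsub).div hNc.continuousOn fun x hx => by
      have := hNpos x hx
      positivity)
    (fun x hx => by
      have h1 := hNpos x hx
      have h2 := hRY x hx
      have h3 := hRpos x ((le_max_left _ _).trans hx)
      have h4 : 0 < Y x := by linarith
      positivity)
    (fun x hx hxS => by
      have hx0 : 0 < x := ha0.trans hx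
      have hN0 : N x ≠ 0 := by
        have := hNpos x hx.le
        positivity
      have dr := hre x
      have di := him x
      have dv := hu' x hx0 hxS
      have du := hu x hx0
      have dY := (((dr.mul dv).sub (((di.mul_const η).mul du).div_const 2)).pow 2).add
        ((((di.mul dv).add (((dr.mul_const η).mul du).div_const 2)).sub
          (du.const_mul η)).pow 2)
      have dN := (((dr.const_sub 1).pow 2).const_sub 1).sub (di.pow 2)
      refine (dY.div dN hN0).congr_deriv ?_
      have hid := riccati_invariant_identity (V x) η (g x).re (g x).im (ρ x).re (ρ x).im (u x)
        (u' x) hη.ne'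
      rw [← hgre x, ← hgim x] at hid
      simp only [hT, hN, hY]
      rw [← hid]
      congr 1
      simp only [Pi.mul_apply, Pi.sub_apply, Pi.add_apply, Pi.pow_apply, Nat.cast_ofNat,
        Nat.add_one_sub_one, pow_one]
      ring)
    (by
      have hρm : AEStronglyMeasurable ρ (volume.restrict (Set.Ioi a)) :=
        (hρ.mono_set hsub').aestronglyMeasurable
      have hρr : AEStronglyMeasurable (fun x => (ρ x).re) (volume.restrict (Set.Ioi a)) :=
        Complex.continuous_re.comp_aestronglyMeasurable hρm
      have hρi : AEStronglyMeasurable (fun x => (ρ x).im) (volume.restrict (Set.Ioi a)) :=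
        Complex.continuous_im.comp_aestronglyMeasurable hρm
      have hYm : AEStronglyMeasurable Y (volume.restrict (Set.Ioi a)) :=
        (hYc.mono hsub').aestronglyMeasurable measurableSet_Ioi
      have h1 := hrec.aestronglyMeasurable (μ := volume.restrict (Set.Ioi a))
      have h2 := himc.aestronglyMeasurable (μ := volume.restrict (Set.Ioi a))
      have h3 := hNc.aestronglyMeasurable (μ := volume.restrict (Set.Ioi a))
      refine AEStronglyMeasurable.div₀ ?_ (h3.pow 2)
      fun_prop)
    ((hρ.mono_set hsub').norm.const_mul 6)
    (fun x hx => riccati_error_bound η (g x).re (g x).im (ρ x).re (ρ x).im (u x) (u' x) ‖ρ x‖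
      (Y x) (norm_nonneg _) (by
        rw [← Complex.normSq_eq_norm_sq, Complex.normSq_apply]
        ring) (hsmall x hx) rfl (hRY x hx))
  refine ⟨L, hL, ?_⟩
  have hNlim : Filter.Tendsto N Filter.atTop (nhds 1) := by
    have h1 := (Complex.continuous_re.tendsto _).comp hg1
    have h2 := (Complex.continuous_im.tendsto _).comp hg1
    simpa using (((h1.const_sub 1).pow 2).const_sub 1).sub (h2.pow 2)
  have hYlim : Filter.Tendsto Y Filter.atTop (nhds L) := by
    have := hlim.mul hNlim
    rw [mul_one] at this
    refine this.congr' ?_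
    filter_upwards [Filter.eventually_ge_atTop a] with x hx
    have := hNpos x hx
    rw [div_mul_cancel₀ _ (by positivity)]
  have hsY : Filter.Tendsto (fun x => √(Y x)) Filter.atTop (nhds √L) :=
    (Real.continuous_sqrt.tendsto _).comp hYlim
  have hdiff : Filter.Tendsto (fun x => √(Y x) - √(R x)) Filter.atTop (nhds 0) := by
    have h0 : Filter.Tendsto (fun x => ‖1 - g x‖ * (2 * √(Y x))) Filter.atTop (nhds 0) := by
      have h1 : Filter.Tendsto (fun x => ‖1 - g x‖) Filter.atTop (nhds 0) := by
        simpa using (hg1.const_sub 1).norm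
      simpa using h1.mul (hsY.const_mul 2)
    refine squeeze_zero_norm' ?_ h0
    filter_upwards [Filter.eventually_ge_atTop a] with x hx
    exact (hsqrt x).trans (mul_le_mul_of_nonneg_left (hRY' x hx) (norm_nonneg _))
  have hfin := (hsY.sub hdiff).pow 2
  rw [sub_zero, Real.sq_sqrt hL.le] at hfin
  refine hfin.congr fun x => ?_
  rw [sub_sub_cancel, Real.sq_sqrt (hR0 x)]

theorem hFun_congr (η : ℝ) (J : ℕ) :
    ∀ f f' : ℕ → ℝ, (∀ i < J, f i = f' i) → hFun J η f = hFun J η f' := by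
  induction J using Nat.strong_induction_on with
  | _ J ih =>
    intro f f' h
    cases J with
    | zero => simp [hFun]
    | succ n =>
      rw [hFun, hFun]
      congr 1
      · congr 2
        exact Finset.sum_congr rfl fun i hi => h i (Finset.mem_range.1 hi)
      · refine Finset.sum_congr rfl fun j _ => ?_
        have hj := Finset.mem_range.1 j.2
        congr 1
        · exact ih j.1 hj _ _ fun i hi => h i (hi.trans hj)
        · exact ih (n - j.1) (by omega) _ _ fun i hi => h _ (by omega)

theorem hFun_succ (η : ℝ) (n : ℕ) (f : ℕ → ℝ) :
    hFun (n + 1) η f = (η - ∑ i ∈ Finset.range (n + 1), f i)⁻¹ *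
      ∑ j ∈ Finset.range (n + 1), hFun j η f * hFun (n - j) η (fun i => f (i + j)) := by
  rw [hFun, Finset.sum_attach (Finset.range (n + 1))
    (fun j => hFun j η f * hFun (n - j) η (fun i => f (i + j)))]

/-- Extension of a tuple by zero. -/
def extendTuple {J : ℕ} (m : Fin J → ℕ) (n : ℕ) : ℕ := if h : n < J then m ⟨n, h⟩ else 0

/-- The block of length `b` of a tuple that starts at position `a`. -/
def tupleBlock {J : ℕ} (m : Fin J → ℕ) (a b : ℕ) : Fin b → ℕ := fun i => extendTuple m (a + i)

/-- The value of `h_J` at the frequencies selected by a tuple of indices. -/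
noncomputable def hTuple (η : ℝ) (φ : ℕ → ℝ) {J : ℕ} (m : Fin J → ℕ) : ℝ :=
  hFun J η (padFin J φ m)

/-- The convolution sum on the right-hand side of the recursion for `h_{n+1}`. -/
noncomputable def hConv (η : ℝ) (φ : ℕ → ℝ) {n : ℕ} (m : Fin (n + 1) → ℕ) : ℝ :=
  ∑ j ∈ Finset.range (n + 1),
    hTuple η φ (tupleBlock m 0 j) * hTuple η φ (tupleBlock m j (n - j))

theorem mul_hTuple (η : ℝ) (φ : ℕ → ℝ) {n : ℕ} (m : Fin (n + 1) → ℕ)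
    (h : η - ∑ i, φ (m i) ≠ 0) :
    (η - ∑ i, φ (m i)) * hTuple η φ m = hConv η φ m := by
  have hs : ∑ i ∈ Finset.range (n + 1), padFin (n + 1) φ m i = ∑ i, φ (m i) := by
    rw [Finset.sum_range]
    exact Finset.sum_congr rfl fun i _ => dif_pos i.isLt
  rw [hTuple, hFun_succ, hs, mul_inv_cancel_left₀ h, hConv]
  refine Finset.sum_congr rfl fun j hj => ?_
  have hj := Finset.mem_range.1 hj
  congr 1
  · refine hFun_congr η j _ _ fun i hi => ?_
    have : i < n + 1 := hi.trans hj
    simp [padFin, tupleBlock, extendTuple, hi, this]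
  · refine hFun_congr η (n - j) _ _ fun i hi => ?_
    have h2 : j + i < n + 1 := by omega
    simp [padFin, tupleBlock, extendTuple, hi, h2, add_comm i j]

/-- Splitting a tuple into two blocks and a last entry. -/
def tupleSplitEquiv (a b : ℕ) : ((Fin a → ℕ) × (Fin b → ℕ)) × ℕ ≃ (Fin (a + b + 1) → ℕ) :=
  (Equiv.prodCongr (Fin.appendEquiv a b) (Equiv.funUnique (Fin 1) ℕ).symm).trans
    (Fin.appendEquiv (a + b) 1)

theorem tupleSplitEquiv_apply (a b : ℕ) (x : Fin a → ℕ) (y : Fin b → ℕ) (k : ℕ) :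
    tupleSplitEquiv a b ((x, y), k) = Fin.append (Fin.append x y) (fun _ : Fin 1 => k) := rfl

theorem tupleBlock_split_left (a b : ℕ) (x : Fin a → ℕ) (y : Fin b → ℕ) (k : ℕ) :
    tupleBlock (tupleSplitEquiv a b ((x, y), k)) 0 a = x := by
  funext i
  have h : (i : ℕ) < a + b + 1 := by omega
  have e : (⟨i, h⟩ : Fin (a + b + 1)) = Fin.castAdd 1 (Fin.castAdd b i) := rfl
  simp [tupleBlock, extendTuple, h, tupleSplitEquiv_apply, e]

theorem tupleBlock_split_right (a b : ℕ) (x : Fin a → ℕ) (y : Fin b → ℕ) (k : ℕ) :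
    tupleBlock (tupleSplitEquiv a b ((x, y), k)) a b = y := by
  funext i
  have h : a + (i : ℕ) < a + b + 1 := by omega
  have e : (⟨a + i, h⟩ : Fin (a + b + 1)) = Fin.castAdd 1 (Fin.natAdd a i) := rfl
  simp [tupleBlock, extendTuple, h, tupleSplitEquiv_apply, e]

theorem extendTuple_split_last (a b : ℕ) (x : Fin a → ℕ) (y : Fin b → ℕ) (k : ℕ) :
    extendTuple (tupleSplitEquiv a b ((x, y), k)) (a + b) = k := by
  have h : a + b < a + b + 1 := by omega
  have e : (⟨a + b, h⟩ : Fin (a + b + 1)) = Fin.natAdd (a + b) (0 : Fin 1) := rfl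
  simp [extendTuple, tupleSplitEquiv_apply, e]

/-- A product of three absolutely convergent series, as a single series over tuples. -/
theorem summable_and_tsum_tuple_mul {a b J : ℕ} (hJ : a + b + 1 = J) {F : (Fin a → ℕ) → ℂ}
    {G : (Fin b → ℕ) → ℂ} {L : ℕ → ℂ} (hF : Summable fun m => ‖F m‖)
    (hG : Summable fun m => ‖G m‖) (hL : Summable fun k => ‖L k‖) :
    (Summable fun m : Fin J → ℕ =>
      ‖F (tupleBlock m 0 a) * G (tupleBlock m a b) * L (extendTuple m (a + b))‖) ∧
    ∑' m : Fin J → ℕ, F (tupleBlock m 0 a) * G (tupleBlock m a b) * L (extendTuple m (a + b))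
      = (∑' m, F m) * (∑' m, G m) * ∑' k, L k := by
  subst hJ
  have hFG := hF.mul_norm hG
  constructor
  · rw [← (tupleSplitEquiv a b).summable_iff]
    refine (hFG.mul_norm hL).congr ?_
    rintro ⟨⟨x, y⟩, k⟩
    simp only [Function.comp, tupleBlock_split_left, tupleBlock_split_right,
      extendTuple_split_last]
  · rw [tsum_mul_tsum_of_summable_norm hF hG, tsum_mul_tsum_of_summable_norm hFG hL,
      ← (tupleSplitEquiv a b).tsum_eq]
    refine tsum_congr ?_
    rintro ⟨⟨x, y⟩, k⟩
    simp only [tupleBlock_split_left, tupleBlock_split_right, extendTuple_split_last]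

theorem prod_tuple_split {M : Type*} [CommMonoid M] {a b J : ℕ} (hJ : a + b + 1 = J) (q : ℕ → M)
    (m : Fin J → ℕ) :
    ∏ i, q (m i) = (∏ i, q (tupleBlock m 0 a i)) * (∏ i, q (tupleBlock m a b i))
      * q (extendTuple m (a + b)) := by
  subst hJ
  have h0 : ∏ i, q (m i) = ∏ n ∈ Finset.range (a + b + 1), q (extendTuple m n) := by
    rw [Finset.prod_range]
    exact Finset.prod_congr rfl fun i _ => by rw [extendTuple, dif_pos i.isLt]
  rw [h0, Finset.prod_range_succ, Finset.prod_range_add, Finset.prod_range,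
    Finset.prod_range]
  simp [tupleBlock]

/-- The oscillating term `c_k e^{-iφ_k x} g_k(x)`. -/
noncomputable def oscTerm (c : ℕ → ℂ) (φ : ℕ → ℝ) (g : ℕ → ℝ → ℂ) (k : ℕ) (x : ℝ) : ℂ :=
  c k * Complex.exp (-Complex.I * (φ k) * x) * g k x

/-- The product of oscillating terms selected by a tuple. -/
noncomputable def oscProd (c : ℕ → ℂ) (φ : ℕ → ℝ) (g : ℕ → ℝ → ℂ) {J : ℕ} (m : Fin J → ℕ)
    (x : ℝ) : ℂ := ∏ i, oscTerm c φ g (m i) x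

/-- The part of the derivative of `oscProd` in which an amplitude is differentiated. -/
noncomputable def oscProdError (c : ℕ → ℂ) (φ : ℕ → ℝ) (g g' : ℕ → ℝ → ℂ) {J : ℕ}
    (m : Fin J → ℕ) (x : ℝ) : ℂ :=
  ∑ i, (∏ j ∈ Finset.univ.erase i, oscTerm c φ g (m j) x) * oscTerm c φ g' (m i) x

/-- The `J`-th term of the asymptotic expansion of the Riccati solution. -/
noncomputable def riccatiTerm (η : ℝ) (c : ℕ → ℂ) (φ : ℕ → ℝ) (g : ℕ → ℝ → ℂ) (J : ℕ)
    (x : ℝ) : ℂ := ∑' m : Fin J → ℕ, (hTuple η φ m : ℂ) * oscProd c φ g m x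

/-- The contribution of amplitude derivatives to the derivative of `riccatiTerm`. -/
noncomputable def riccatiTermError (η : ℝ) (c : ℕ → ℂ) (φ : ℕ → ℝ) (g g' : ℕ → ℝ → ℂ) (J : ℕ)
    (x : ℝ) : ℂ := ∑' m : Fin J → ℕ, (hTuple η φ m : ℂ) * oscProdError c φ g g' m x

theorem norm_oscTerm (c : ℕ → ℂ) (φ : ℕ → ℝ) (g : ℕ → ℝ → ℂ) (k : ℕ) (x : ℝ) :
    ‖oscTerm c φ g k x‖ = ‖c k‖ * ‖g k x‖ := by
  have : ‖Complex.exp (-Complex.I * (φ k) * x)‖ = 1 := by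
    rw [Complex.norm_exp]
    simp
  rw [oscTerm, norm_mul, norm_mul, this, mul_one]

theorem hasDerivAt_oscTerm (c : ℕ → ℂ) (φ : ℕ → ℝ) {g g' : ℕ → ℝ → ℂ}
    (hg : ∀ k x, HasDerivAt (g k) (g' k x) x) (k : ℕ) (x : ℝ) :
    HasDerivAt (oscTerm c φ g k)
      (-Complex.I * φ k * oscTerm c φ g k x + oscTerm c φ g' k x) x := by
  have h1 : HasDerivAt (fun y : ℝ => -Complex.I * (φ k) * (y : ℂ)) (-Complex.I * φ k) x := by
    simpa using (Complex.ofRealCLM.hasDerivAt (x := x)).const_mul (-Complex.I * (φ k : ℂ))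
  refine (((h1.cexp).const_mul (c k)).mul (hg k x)).congr_deriv ?_
  simp only [oscTerm]
  ring

theorem hasDerivAt_oscProd (c : ℕ → ℂ) (φ : ℕ → ℝ) {g g' : ℕ → ℝ → ℂ}
    (hg : ∀ k x, HasDerivAt (g k) (g' k x) x) {J : ℕ} (m : Fin J → ℕ) (x : ℝ) :
    HasDerivAt (oscProd c φ g m)
      (-Complex.I * ((∑ i, φ (m i) : ℝ) : ℂ) * oscProd c φ g m x + oscProdError c φ g g' m x)
      x := by
  refine (HasDerivAt.fun_finsetProd (u := Finset.univ)
    (fun i _ => hasDerivAt_oscTerm c φ hg (m i) x)).congr_deriv ?_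
  simp only [smul_eq_mul, mul_add, Finset.sum_add_distrib, oscProdError, Complex.ofReal_sum]
  congr 1
  rw [Finset.mul_sum, Finset.sum_mul]
  refine Finset.sum_congr rfl fun i _ => ?_
  rw [oscProd, ← Finset.prod_erase_mul Finset.univ _ (Finset.mem_univ i)]
  ring

theorem norm_oscProd_le (c : ℕ → ℂ) (φ : ℕ → ℝ) {g : ℕ → ℝ → ℂ} {M : ℝ}
    (hM : ∀ k x, ‖g k x‖ ≤ M) {J : ℕ} (m : Fin J → ℕ) (x : ℝ) :
    ‖oscProd c φ g m x‖ ≤ ‖∏ i, c (m i)‖ * M ^ J := by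
  rw [oscProd, norm_prod, norm_prod]
  calc ∏ i, ‖oscTerm c φ g (m i) x‖ ≤ ∏ i, (‖c (m i)‖ * M) := by
        refine Finset.prod_le_prod (fun i _ => norm_nonneg _) fun i _ => ?_
        rw [norm_oscTerm]
        exact mul_le_mul_of_nonneg_left (hM _ _) (norm_nonneg _)
    _ = _ := by simp [Finset.prod_mul_distrib]

theorem norm_oscProdError_le (c : ℕ → ℂ) (φ : ℕ → ℝ) {g g' : ℕ → ℝ → ℂ} {M : ℝ}
    (hM : ∀ k x, ‖g k x‖ ≤ M) {J : ℕ} (m : Fin J → ℕ) (x : ℝ) :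
    ‖oscProdError c φ g g' m x‖ ≤ ‖∏ i, c (m i)‖ * M ^ (J - 1) * ∑ i, ‖g' (m i) x‖ := by
  rw [Finset.mul_sum]
  refine (norm_sum_le _ _).trans (Finset.sum_le_sum fun i _ => ?_)
  rw [norm_mul, norm_prod, norm_oscTerm]
  have h1 : ∏ j ∈ Finset.univ.erase i, ‖oscTerm c φ g (m j) x‖
      ≤ ∏ j ∈ Finset.univ.erase i, (‖c (m j)‖ * M) := by
    refine Finset.prod_le_prod (fun i _ => norm_nonneg _) fun i _ => ?_
    rw [norm_oscTerm]
    exact mul_le_mul_of_nonneg_left (hM _ _) (norm_nonneg _)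
  rw [Finset.prod_mul_distrib, Finset.prod_const, Finset.card_erase_of_mem (Finset.mem_univ i),
    Finset.card_univ, Fintype.card_fin] at h1
  rw [norm_prod, ← Finset.prod_erase_mul Finset.univ (fun i => ‖c (m i)‖) (Finset.mem_univ i)]
  calc _ ≤ ((∏ j ∈ Finset.univ.erase i, ‖c (m j)‖) * M ^ (J - 1)) * (‖c (m i)‖ * ‖g' (m i) x‖) := by
        gcongr
    _ = _ := by ring

theorem summable_norm_mul_oscProd {c : ℕ → ℂ} {φ : ℕ → ℝ} {g : ℕ → ℝ → ℂ} {M : ℝ}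
    (hM : ∀ k x, ‖g k x‖ ≤ M) {J : ℕ} {a : (Fin J → ℕ) → ℝ}
    (ha : Summable fun m => ‖∏ i, c (m i)‖ * |a m|) (x : ℝ) :
    Summable fun m => ‖(a m : ℂ) * oscProd c φ g m x‖ := by
  refine Summable.of_nonneg_of_le (fun m => norm_nonneg _) (fun m => ?_) (ha.mul_right (M ^ J))
  rw [norm_mul, Complex.norm_real, Real.norm_eq_abs]
  calc |a m| * ‖oscProd c φ g m x‖ ≤ |a m| * (‖∏ i, c (m i)‖ * M ^ J) := by
        gcongr
        exact norm_oscProd_le c φ hM m x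
    _ = _ := by ring

theorem summable_norm_mul_oscProdError {c : ℕ → ℂ} {φ : ℕ → ℝ} {g g' : ℕ → ℝ → ℂ} {M : ℝ}
    (hM0 : 0 ≤ M) (hM : ∀ k x, ‖g k x‖ ≤ M) (hM' : ∀ k x, ‖g' k x‖ ≤ 2 * M) {J : ℕ}
    {a : (Fin J → ℕ) → ℝ} (ha : Summable fun m => ‖∏ i, c (m i)‖ * |a m|) :
    (∀ m x, ‖(a m : ℂ) * oscProdError c φ g g' m x‖
      ≤ ‖∏ i, c (m i)‖ * |a m| * (M ^ (J - 1) * (J * (2 * M)))) ∧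
    Summable fun m : Fin J → ℕ => ‖∏ i, c (m i)‖ * |a m| * (M ^ (J - 1) * (J * (2 * M))) := by
  refine ⟨fun m x => ?_, ha.mul_right _⟩
  rw [norm_mul, Complex.norm_real, Real.norm_eq_abs]
  have h1 : ∑ i, ‖g' (m i) x‖ ≤ J * (2 * M) := by
    simpa using Finset.sum_le_sum fun (i : Fin J) (_ : i ∈ Finset.univ) => hM' (m i) x
  calc |a m| * ‖oscProdError c φ g g' m x‖
      ≤ |a m| * (‖∏ i, c (m i)‖ * M ^ (J - 1) * ∑ i, ‖g' (m i) x‖) := by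
        gcongr
        exact norm_oscProdError_le c φ hM m x
    _ ≤ |a m| * (‖∏ i, c (m i)‖ * M ^ (J - 1) * (J * (2 * M))) := by gcongr
    _ = _ := by ring

theorem summable_hConv {η : ℝ} {c : ℕ → ℂ} {φ : ℕ → ℝ} (hc : Summable fun k => ‖c k‖) {n : ℕ}
    (hW : ∀ j ≤ n, Summable fun m : Fin j → ℕ => ‖∏ i, c (m i)‖ * |hTuple η φ m|) :
    Summable fun m : Fin (n + 1) → ℕ => ‖∏ i, c (m i)‖ * |hConv η φ m| := by
  have hW' : ∀ j ≤ n, Summable fun m : Fin j → ℕ =>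
      ‖((∏ i, c (m i)) * (hTuple η φ m : ℂ))‖ := fun j hj => by
    simpa only [norm_mul, Complex.norm_real, Real.norm_eq_abs] using hW j hj
  have hsum : Summable fun m : Fin (n + 1) → ℕ => ∑ j ∈ Finset.range (n + 1),
      ‖((∏ i, c (tupleBlock m 0 j i)) * (hTuple η φ (tupleBlock m 0 j) : ℂ))
        * ((∏ i, c (tupleBlock m j (n - j) i)) * (hTuple η φ (tupleBlock m j (n - j)) : ℂ))
        * c (extendTuple m (j + (n - j)))‖ := by
    refine summable_sum fun j hj => ?_
    have hj := Finset.mem_range.1 hj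
    exact (summable_and_tsum_tuple_mul (J := n + 1) (by omega) (hW' j (by omega)) (hW' (n - j) (by omega))
      hc).1
  refine Summable.of_nonneg_of_le (fun m => by positivity) (fun m => ?_) hsum
  rw [hConv]
  refine (mul_le_mul_of_nonneg_left (Finset.abs_sum_le_sum_abs _ _) (norm_nonneg _)).trans ?_
  rw [Finset.mul_sum]
  refine Finset.sum_le_sum fun j hj => le_of_eq ?_
  have hj := Finset.mem_range.1 hj
  rw [prod_tuple_split (a := j) (b := n - j) (by omega) c m]
  simp only [norm_mul, Complex.norm_real, Real.norm_eq_abs, abs_mul]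
  ring

theorem tsum_hConv {η : ℝ} {c : ℕ → ℂ} {φ : ℕ → ℝ} {g : ℕ → ℝ → ℂ} {M : ℝ}
    (hM : ∀ k x, ‖g k x‖ ≤ M)
    (hc : Summable fun k => ‖c k‖) {n : ℕ}
    (hW : ∀ j ≤ n, Summable fun m : Fin j → ℕ => ‖∏ i, c (m i)‖ * |hTuple η φ m|) (x : ℝ) :
    ∑' m : Fin (n + 1) → ℕ, (hConv η φ m : ℂ) * oscProd c φ g m x
      = (∑ j ∈ Finset.range (n + 1), riccatiTerm η c φ g j x * riccatiTerm η c φ g (n - j) x)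
        * ∑' k, oscTerm c φ g k x := by
  have hL : Summable fun k => ‖oscTerm c φ g k x‖ := by
    refine Summable.of_nonneg_of_le (fun _ => norm_nonneg _) (fun k => ?_) (hc.mul_right M)
    rw [norm_oscTerm]
    exact mul_le_mul_of_nonneg_left (hM k x) (norm_nonneg _)
  have key : ∀ j ∈ Finset.range (n + 1), _ := fun j hj =>
    summable_and_tsum_tuple_mul (a := j) (b := n - j) (J := n + 1) (by have := Finset.mem_range.1 hj; omega)
      (summable_norm_mul_oscProd (φ := φ) hM (hW j (by have := Finset.mem_range.1 hj; omega)) x)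
      (summable_norm_mul_oscProd (φ := φ) hM (hW (n - j) (by omega)) x) hL
  rw [Finset.sum_mul]
  simp only [riccatiTerm]
  rw [← Finset.sum_congr rfl fun j hj => (key j hj).2,
    ← Summable.tsum_finsetSum fun j hj => (key j hj).1.of_norm]
  refine tsum_congr fun m => ?_
  rw [hConv, Complex.ofReal_sum, Finset.sum_mul]
  refine Finset.sum_congr rfl fun j hj => ?_
  rw [oscProd, prod_tuple_split (a := j) (b := n - j) (by have := Finset.mem_range.1 hj; omega)
    (fun k => oscTerm c φ g k x) m, oscProd, oscProd, Complex.ofReal_mul]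
  ring

theorem hasDerivAt_riccatiTerm {η : ℝ} {c : ℕ → ℂ} {φ : ℕ → ℝ} {g g' : ℕ → ℝ → ℂ} {M : ℝ}
    (hM0 : 0 ≤ M) (hg : ∀ k x, HasDerivAt (g k) (g' k x) x) (hM : ∀ k x, ‖g k x‖ ≤ M)
    (hM' : ∀ k x, ‖g' k x‖ ≤ 2 * M) (hc : Summable fun k => ‖c k‖) {n : ℕ}
    (hW : ∀ j ≤ n + 1, Summable fun m : Fin j → ℕ => ‖∏ i, c (m i)‖ * |hTuple η φ m|)
    (hres : ∀ m : Fin (n + 1) → ℕ, η - ∑ i, φ (m i) ≠ 0) (x : ℝ) :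
    HasDerivAt (riccatiTerm η c φ g (n + 1))
      (-Complex.I * η * riccatiTerm η c φ g (n + 1) x
        + Complex.I * ((∑ j ∈ Finset.range (n + 1),
            riccatiTerm η c φ g j x * riccatiTerm η c φ g (n - j) x) * ∑' k, oscTerm c φ g k x)
        + riccatiTermError η c φ g g' (n + 1) x) x := by
  have hK := summable_hConv (n := n) (η := η) (φ := φ) hc fun j hj => hW j (by omega)
  have hH := hW (n + 1) le_rfl
  obtain ⟨hE, hEs⟩ := summable_norm_mul_oscProdError (φ := φ) hM0 hM hM' hH
  have sP := fun x => summable_norm_mul_oscProd (φ := φ) hM hH x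
  have sK := fun x => summable_norm_mul_oscProd (φ := φ) hM hK x
  have sE : ∀ x, Summable fun m : Fin (n + 1) → ℕ =>
      (hTuple η φ m : ℂ) * oscProdError c φ g g' m x := fun x =>
    (Summable.of_nonneg_of_le (fun _ => norm_nonneg _) (fun m => hE m x) hEs).of_norm
  have hder : ∀ (m : Fin (n + 1) → ℕ) (y : ℝ),
      HasDerivAt (fun z => (hTuple η φ m : ℂ) * oscProd c φ g m z)
        (-Complex.I * η * ((hTuple η φ m : ℂ) * oscProd c φ g m y)
          + Complex.I * ((hConv η φ m : ℂ) * oscProd c φ g m y)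
          + (hTuple η φ m : ℂ) * oscProdError c φ g g' m y) y := by
    intro m y
    refine ((hasDerivAt_oscProd c φ hg m y).const_mul _).congr_deriv ?_
    rw [← mul_hTuple η φ m (hres m)]
    push_cast
    ring
  have hnb : ∀ (a : (Fin (n + 1) → ℕ) → ℝ) (m : Fin (n + 1) → ℕ) (y : ℝ),
      ‖(a m : ℂ) * oscProd c φ g m y‖ ≤ ‖∏ i, c (m i)‖ * |a m| * M ^ (n + 1) := by
    intro a m y
    rw [norm_mul, Complex.norm_real, Real.norm_eq_abs]
    calc |a m| * ‖oscProd c φ g m y‖ ≤ |a m| * (‖∏ i, c (m i)‖ * M ^ (n + 1)) := by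
          gcongr
          exact norm_oscProd_le c φ hM m y
      _ = _ := by ring
  have hmain := hasDerivAt_tsum
    (u := fun m : Fin (n + 1) → ℕ => |η| * (‖∏ i, c (m i)‖ * |hTuple η φ m| * M ^ (n + 1))
      + ‖∏ i, c (m i)‖ * |hConv η φ m| * M ^ (n + 1)
      + ‖∏ i, c (m i)‖ * |hTuple η φ m| * (M ^ (n + 1 - 1) * ((n + 1 : ℕ) * (2 * M))))
    ((((hH.mul_right _).mul_left _).add (hK.mul_right _)).add hEs) hder
    (fun m y => by
      refine (norm_add_le _ _).trans (add_le_add ((norm_add_le _ _).trans (add_le_add ?_ ?_))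
        (hE m y))
      · rw [norm_mul, norm_mul, norm_neg, Complex.norm_I, one_mul, Complex.norm_real,
          Real.norm_eq_abs]
        exact mul_le_mul_of_nonneg_left (hnb _ m y) (abs_nonneg _)
      · rw [norm_mul, Complex.norm_I, one_mul]
        exact hnb _ m y)
    (sP 0).of_norm x
  refine hmain.congr_deriv ?_
  rw [Summable.tsum_add (((sP x).of_norm.mul_left _).add ((sK x).of_norm.mul_left _)) (sE x),
    Summable.tsum_add ((sP x).of_norm.mul_left _) ((sK x).of_norm.mul_left _), tsum_mul_left,
    tsum_mul_left, tsum_hConv hM hc (fun j hj => hW j (by omega)) x]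
  rfl

/-- Pointwise domination on `(0,∞)` by a measurable function of finite integral. -/
def L1Dominated (f : ℝ → ℂ) : Prop :=
  ∃ B : ℝ → ℝ≥0∞, Measurable B ∧ ∫⁻ x in Set.Ioi (0:ℝ), B x < ⊤ ∧ ∀ x, 0 < x → ‖f x‖ₑ ≤ B x

theorem L1Dominated.integrableOn {f : ℝ → ℂ} (h : L1Dominated f) (hf : Measurable f) :
    IntegrableOn f (Set.Ioi 0) := by
  obtain ⟨B, -, hB, hfB⟩ := h
  refine ⟨hf.aestronglyMeasurable, ?_⟩
  exact (setLIntegral_mono' measurableSet_Ioi fun x hx => hfB x hx).trans_lt hB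

theorem L1Dominated.add {f g : ℝ → ℂ} (hf : L1Dominated f) (hg : L1Dominated g) :
    L1Dominated fun x => f x + g x := by
  obtain ⟨B, hBm, hB, hfB⟩ := hf
  obtain ⟨C, hCm, hC, hgC⟩ := hg
  refine ⟨fun x => B x + C x, hBm.add hCm, ?_, fun x hx =>
    (enorm_add_le _ _).trans (add_le_add (hfB x hx) (hgC x hx))⟩
  rw [lintegral_add_left hBm]
  exact ENNReal.add_lt_top.2 ⟨hB, hC⟩

theorem L1Dominated.bdd_mul {f h : ℝ → ℂ} (hf : L1Dominated f) {C : ℝ≥0∞} (hC : C ≠ ⊤)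
    (hh : ∀ x, 0 < x → ‖h x‖ₑ ≤ C) : L1Dominated fun x => h x * f x := by
  obtain ⟨B, hBm, hB, hfB⟩ := hf
  refine ⟨fun x => C * B x, hBm.const_mul C, ?_, fun x hx => ?_⟩
  · rw [lintegral_const_mul _ hBm]
    exact ENNReal.mul_lt_top hC.lt_top hB
  · rw [enorm_mul]
    exact mul_le_mul' (hh x hx) (hfB x hx)

theorem L1Dominated.const_mul {f : ℝ → ℂ} (hf : L1Dominated f) (z : ℂ) :
    L1Dominated fun x => z * f x :=
  hf.bdd_mul (enorm_ne_top (x := z)) fun _ _ => le_rfl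

theorem L1Dominated.sum {ι : Type*} (s : Finset ι) {f : ι → ℝ → ℂ}
    (h : ∀ i ∈ s, L1Dominated (f i)) : L1Dominated fun x => ∑ i ∈ s, f i x := by
  classical
  induction s using Finset.induction_on with
  | empty => exact ⟨0, measurable_zero, by simp, by simp⟩
  | insert a s ha ih =>
    simp only [Finset.sum_insert ha]
    exact (h a (Finset.mem_insert_self a s)).add
      (ih fun i hi => h i (Finset.mem_insert_of_mem hi))

theorem L1Dominated.tsum {ι : Type*} [Countable ι] {F : ι → ℝ → ℂ} (B : ι → ℝ → ℝ≥0∞)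
    (hBm : ∀ i, Measurable (B i)) (hFB : ∀ i x, 0 < x → ‖F i x‖ₑ ≤ B i x)
    (hB : ∑' i, ∫⁻ x in Set.Ioi (0:ℝ), B i x < ⊤) : L1Dominated fun x => ∑' i, F i x := by
  refine ⟨fun x => ∑' i, B i x, Measurable.tsum hBm, ?_, fun x hx =>
    enorm_tsum_le_tsum_enorm.trans (ENNReal.tsum_le_tsum fun i => hFB i x hx)⟩
  rwa [lintegral_tsum fun i => (hBm i).aemeasurable]

theorem l1Dominated_of_le_pow {f : ℝ → ℂ} {S : ℝ → ℝ≥0∞} (hSm : Measurable S) {N C : ℝ≥0∞}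
    (hN : N ≠ ⊤) (hSN : ∀ x, S x ≤ N) {p q : ℕ} (hpq : p ≤ q)
    (hS : ∫⁻ x in Set.Ioi (0:ℝ), S x ^ p < ⊤) (hC : C ≠ ⊤)
    (hf : ∀ x, 0 < x → ‖f x‖ₑ ≤ C * S x ^ q) : L1Dominated f := by
  refine ⟨fun x => C * N ^ (q - p) * S x ^ p, (hSm.pow_const p).const_mul _, ?_, fun x hx => ?_⟩
  · rw [lintegral_const_mul _ (hSm.pow_const p)]
    exact ENNReal.mul_lt_top (ENNReal.mul_lt_top hC.lt_top (ENNReal.pow_lt_top hN.lt_top)) hS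
  · refine (hf x hx).trans ?_
    dsimp only
    rw [mul_assoc, ← Nat.sub_add_cancel hpq, pow_add, Nat.add_sub_cancel]
    exact mul_le_mul' le_rfl (mul_le_mul' (pow_le_pow_left' (hSN x) _) le_rfl)

theorem enorm_oscTerm (c : ℕ → ℂ) (φ : ℕ → ℝ) (g : ℕ → ℝ → ℂ) (k : ℕ) (x : ℝ) :
    ‖oscTerm c φ g k x‖ₑ = ‖c k‖ₑ * ‖g k x‖ₑ := by
  simp only [← ofReal_norm, norm_oscTerm, ENNReal.ofReal_mul (norm_nonneg _)]

theorem enorm_finsetProd {ι : Type*} (s : Finset ι) (f : ι → ℂ) :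
    ‖∏ i ∈ s, f i‖ₑ = ∏ i ∈ s, ‖f i‖ₑ := by
  simp only [← ofReal_norm, norm_prod]
  exact ENNReal.ofReal_prod_of_nonneg fun _ _ => norm_nonneg _

theorem enorm_tsum_oscTerm_le (c : ℕ → ℂ) (φ : ℕ → ℝ) (g : ℕ → ℝ → ℂ) {x : ℝ} {S : ℝ≥0∞}
    (hS : ∀ k, ‖g k x‖ₑ ≤ S) : ‖∑' k, oscTerm c φ g k x‖ₑ ≤ (∑' k, ‖c k‖ₑ) * S := by
  refine enorm_tsum_le_tsum_enorm.trans ?_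
  rw [← ENNReal.tsum_mul_right]
  refine ENNReal.tsum_le_tsum fun k => ?_
  rw [enorm_oscTerm]
  exact mul_le_mul' le_rfl (hS k)

theorem enorm_riccatiTerm_le (η : ℝ) (c : ℕ → ℂ) (φ : ℕ → ℝ) (g : ℕ → ℝ → ℂ) (J : ℕ) {x : ℝ}
    {S : ℝ≥0∞} (hS : ∀ k, ‖g k x‖ₑ ≤ S) :
    ‖riccatiTerm η c φ g J x‖ₑ
      ≤ (∑' m : Fin J → ℕ, ENNReal.ofReal (‖∏ i, c (m i)‖ * |hTuple η φ m|)) * S ^ J := by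
  refine enorm_tsum_le_tsum_enorm.trans ?_
  rw [← ENNReal.tsum_mul_right]
  refine ENNReal.tsum_le_tsum fun m => ?_
  have h1 : ‖oscProd c φ g m x‖ₑ ≤ ENNReal.ofReal ‖∏ i, c (m i)‖ * S ^ J := by
    rw [oscProd, enorm_finsetProd, ofReal_norm, enorm_finsetProd]
    calc ∏ i, ‖oscTerm c φ g (m i) x‖ₑ ≤ ∏ i, (‖c (m i)‖ₑ * S) := by
          refine Finset.prod_le_prod' fun i _ => ?_
          rw [enorm_oscTerm]
          exact mul_le_mul' le_rfl (hS _)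
      _ = _ := by simp [Finset.prod_mul_distrib]
  have h2 : ‖(hTuple η φ m : ℂ)‖ₑ = ENNReal.ofReal |hTuple η φ m| := by
    rw [← ofReal_norm, Complex.norm_real, Real.norm_eq_abs]
  rw [enorm_mul, h2, ENNReal.ofReal_mul (norm_nonneg _)]
  calc _ ≤ ENNReal.ofReal |hTuple η φ m| * (ENNReal.ofReal ‖∏ i, c (m i)‖ * S ^ J) :=
        mul_le_mul' le_rfl h1
    _ = _ := by ring

theorem riccatiTerm_zero (η : ℝ) (c : ℕ → ℂ) (φ : ℕ → ℝ) (g : ℕ → ℝ → ℂ) (x : ℝ) :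
    riccatiTerm η c φ g 0 x = 1 := by
  rw [riccatiTerm, tsum_fintype]
  simp [hTuple, hFun, oscProd]

theorem tendsto_riccatiTerm {η : ℝ} {c : ℕ → ℂ} {φ : ℕ → ℝ} {g : ℕ → ℝ → ℂ} {M : ℝ}
    (hM : ∀ k x, ‖g k x‖ ≤ M) (hg0 : ∀ k, Filter.Tendsto (g k) Filter.atTop (nhds 0)) {n : ℕ}
    (hW : Summable fun m : Fin (n + 1) → ℕ => ‖∏ i, c (m i)‖ * |hTuple η φ m|) :
    Filter.Tendsto (riccatiTerm η c φ g (n + 1)) Filter.atTop (nhds 0) := by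
  have hosc : ∀ k, Filter.Tendsto (oscTerm c φ g k) Filter.atTop (nhds 0) := fun k => by
    rw [tendsto_zero_iff_norm_tendsto_zero]
    simp only [norm_oscTerm]
    simpa using (hg0 k).norm.const_mul ‖c k‖
  have h := tendsto_tsum_of_dominated_convergence (𝓕 := Filter.atTop)
    (f := fun (x : ℝ) (m : Fin (n + 1) → ℕ) => (hTuple η φ m : ℂ) * oscProd c φ g m x)
    (g := fun _ => 0) (hW.mul_right (M ^ (n + 1)))
    (fun m => by
      have := (tendsto_finsetProd Finset.univ fun (i : Fin (n + 1)) _ => hosc (m i)).const_mul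
        (hTuple η φ m : ℂ)
      simpa [oscProd] using this)
    (Filter.Eventually.of_forall fun x m => by
      rw [norm_mul, Complex.norm_real, Real.norm_eq_abs]
      calc |hTuple η φ m| * ‖oscProd c φ g m x‖
          ≤ |hTuple η φ m| * (‖∏ i, c (m i)‖ * M ^ (n + 1)) := by
            gcongr
            exact norm_oscProd_le c φ hM m x
        _ = _ := by ring)
  rw [tsum_zero] at h
  exact h

theorem l1Dominated_riccatiTermError {η : ℝ} {c : ℕ → ℂ} {φ : ℕ → ℝ} {g g' : ℕ → ℝ → ℂ} {M : ℝ}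
    (hM0 : 0 ≤ M) (hM : ∀ k x, ‖g k x‖ ≤ M) {D : ℕ → ℝ → ℝ} (hDm : ∀ k, Measurable (D k))
    (hD : ∀ k x, 0 < x → ‖g' k x‖ ≤ D k x)
    (hDi : ∀ k, ∫⁻ x in Set.Ioi (0:ℝ), ENNReal.ofReal (D k x) ≤ ENNReal.ofReal (2 * M)) {J : ℕ}
    (hW : Summable fun m : Fin J → ℕ => ‖∏ i, c (m i)‖ * |hTuple η φ m|) :
    L1Dominated (riccatiTermError η c φ g g' J) := by
  refine L1Dominated.tsum (fun m x =>
    ENNReal.ofReal (‖∏ i, c (m i)‖ * |hTuple η φ m| * M ^ (J - 1))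
      * ∑ i, ENNReal.ofReal (D (m i) x))
    (fun m => (Finset.measurable_fun_sum _ fun i _ => (hDm (m i)).ennreal_ofReal).const_mul _)
    (fun m x hx => ?_) ?_
  · have hDp : ∀ i, 0 ≤ D (m i) x := fun i => (norm_nonneg _).trans (hD (m i) x hx)
    rw [← ofReal_norm, ← ENNReal.ofReal_sum_of_nonneg fun i _ => hDp i,
      ← ENNReal.ofReal_mul (by positivity)]
    refine ENNReal.ofReal_le_ofReal ?_
    rw [norm_mul, Complex.norm_real, Real.norm_eq_abs]
    calc |hTuple η φ m| * ‖oscProdError c φ g g' m x‖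
        ≤ |hTuple η φ m| * (‖∏ i, c (m i)‖ * M ^ (J - 1) * ∑ i, ‖g' (m i) x‖) := by
          gcongr
          exact norm_oscProdError_le c φ hM m x
      _ ≤ |hTuple η φ m| * (‖∏ i, c (m i)‖ * M ^ (J - 1) * ∑ i, D (m i) x) := by
          gcongr with i
          exact hD _ x hx
      _ = _ := by ring
  · refine lt_of_le_of_lt (ENNReal.tsum_le_tsum (g := fun m : Fin J → ℕ =>
      ENNReal.ofReal (‖∏ i, c (m i)‖ * |hTuple η φ m| * (M ^ (J - 1) * (J * (2 * M)))))
      fun m => ?_) (hW.mul_right _).tsum_ofReal_lt_top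
    rw [lintegral_const_mul _
      (Finset.measurable_fun_sum _ fun i _ => (hDm (m i)).ennreal_ofReal),
      lintegral_finsetSum _ fun i _ => (hDm (m i)).ennreal_ofReal]
    refine (mul_le_mul' le_rfl (Finset.sum_le_sum fun i _ => hDi (m i))).trans (le_of_eq ?_)
    rw [Finset.sum_const, Finset.card_univ, Fintype.card_fin, nsmul_eq_mul,
      ← ENNReal.ofReal_natCast, ← ENNReal.ofReal_mul (by positivity),
      ← ENNReal.ofReal_mul (by positivity)]
    congr 1
    ring

/-- The square of a partial sum, split into its low-order Cauchy product and the remainder. -/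
theorem sq_sum_range_succ (f : ℕ → ℂ) (q : ℕ) :
    (∑ a ∈ Finset.range (q + 1), f a) ^ 2
      = (∑ n ∈ Finset.range q, ∑ j ∈ Finset.range (n + 1), f j * f (n - j))
        + ∑ a ∈ Finset.range (q + 1), ∑ b ∈ Finset.Ico (q - a) (q + 1), f a * f b := by
  rw [Finset.sum_range_diag_flip q fun a b => f a * f b, sq, Finset.sum_mul_sum]
  have h : ∑ a ∈ Finset.range q, ∑ b ∈ Finset.range (q - a), f a * f b
      = ∑ a ∈ Finset.range (q + 1), ∑ b ∈ Finset.range (q - a), f a * f b := by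
    simp [Finset.sum_range_succ]
  rw [h, ← Finset.sum_add_distrib]
  exact Finset.sum_congr rfl fun a _ =>
    (Finset.sum_range_add_sum_Ico _ (by omega)).symm

/-- The truncated expansion `∑ η^{-J} riccatiTerm J` solves the Riccati equation of a potential
close to an oscillatory series up to an integrable error. -/
theorem exists_approx_riccati {q : ℕ} {η : ℝ} (hη : η ≠ 0) {c : ℕ → ℂ} {φ : ℕ → ℝ}
    {g g' : ℕ → ℝ → ℂ} {M : ℝ} (hM0 : 0 ≤ M) (hg : ∀ k x, HasDerivAt (g k) (g' k x) x)
    (hM : ∀ k x, ‖g k x‖ ≤ M) (hM' : ∀ k x, ‖g' k x‖ ≤ 2 * M)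
    (hg0 : ∀ k, Filter.Tendsto (g k) Filter.atTop (nhds 0))
    {D : ℕ → ℝ → ℝ} (hDm : ∀ k, Measurable (D k)) (hD : ∀ k x, 0 < x → ‖g' k x‖ ≤ D k x)
    (hDi : ∀ k, ∫⁻ x in Set.Ioi (0:ℝ), ENNReal.ofReal (D k x) ≤ ENNReal.ofReal (2 * M))
    {S : ℝ → ℝ≥0∞} (hSm : Measurable S) (hSM : ∀ x, S x ≤ ENNReal.ofReal M)
    (hS : ∫⁻ x in Set.Ioi (0:ℝ), S x ^ (q + 1) < ⊤) (hgS : ∀ k x, ‖g k x‖ₑ ≤ S x)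
    (hc : Summable fun k => ‖c k‖)
    (hW : ∀ j ≤ q, Summable fun m : Fin j → ℕ => ‖∏ i, c (m i)‖ * |hTuple η φ m|)
    (hres : ∀ n < q, ∀ m : Fin (n + 1) → ℕ, η - ∑ i, φ (m i) ≠ 0)
    {V : ℝ → ℝ} (hVm : Measurable V)
    (hV : L1Dominated fun x => V x - ∑' k, oscTerm c φ g k x) :
    ∃ G G' : ℝ → ℂ, (∀ x, HasDerivAt G (G' x) x) ∧ Filter.Tendsto G Filter.atTop (nhds 1) ∧
      IntegrableOn (fun x => G' x + Complex.I * η * (G x - 1) - Complex.I * V x / η * G x ^ 2)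
        (Set.Ioi 0) := by
  have hη' : (η : ℂ) ≠ 0 := Complex.ofReal_ne_zero.2 hη
  set R := riccatiTerm η c φ g with hR
  set N := ENNReal.ofReal M with hN
  have hNt : N ≠ ⊤ := ENNReal.ofReal_ne_top
  set W : ℂ := (η : ℂ)⁻¹ with hWdef
  set T : ℝ → ℂ := fun x => ∑' k, oscTerm c φ g k x with hT
  set f : ℕ → ℝ → ℂ := fun a x => W ^ a * R a x with hf
  set G : ℝ → ℂ := fun x => ∑ a ∈ Finset.range (q + 1), f a x with hG
  set R' : ℕ → ℝ → ℂ := fun n x => -Complex.I * η * R (n + 1) x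
        + Complex.I * ((∑ j ∈ Finset.range (n + 1), R j x * R (n - j) x) * T x)
        + riccatiTermError η c φ g g' (n + 1) x with hR'
  set G' : ℝ → ℂ := fun x => ∑ n ∈ Finset.range q, W ^ (n + 1) * R' n x with hG'
  have hR0 : ∀ x, R 0 x = 1 := riccatiTerm_zero η c φ g
  have hRd : ∀ n < q, ∀ x, HasDerivAt (R (n + 1)) (R' n x) x := fun n hn x =>
    hasDerivAt_riccatiTerm hM0 hg hM hM' hc (fun j hj => hW j (by omega)) (hres n hn) x
  have hG1 : G = fun x => (∑ n ∈ Finset.range q, W ^ (n + 1) * R (n + 1) x) + 1 := by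
    funext x
    simp only [hG, hf]
    rw [Finset.sum_range_succ', hR0, pow_zero, mul_one]
  have hGd : ∀ x, HasDerivAt G (G' x) x := fun x => by
    rw [hG1]
    exact (HasDerivAt.fun_sum fun n hn =>
      (hRd n (Finset.mem_range.1 hn) x).const_mul _).add_const 1
  have hGt : Filter.Tendsto G Filter.atTop (nhds 1) := by
    rw [hG1]
    have := (tendsto_finsetSum (Finset.range q) fun n hn =>
      (tendsto_riccatiTerm hM hg0 (hW (n + 1) (Finset.mem_range.1 hn))).const_mul
        (W ^ (n + 1))).add_const 1
    simpa using this
  -- pointwise bounds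
  set A : ℕ → ℝ≥0∞ := fun a => ‖W ^ a‖ₑ *
    ∑' m : Fin a → ℕ, ENNReal.ofReal (‖∏ i, c (m i)‖ * |hTuple η φ m|) with hA
  have hAt : ∀ a ≤ q, A a ≠ ⊤ := fun a ha =>
    ENNReal.mul_ne_top enorm_ne_top (hW a ha).tsum_ofReal_ne_top
  have hfA : ∀ a x, ‖f a x‖ₑ ≤ A a * S x ^ a := fun a x => by
    simp only [hf, hA, enorm_mul, mul_assoc]
    exact mul_le_mul' le_rfl (enorm_riccatiTerm_le η c φ g a fun k => hgS k x)
  have hcT : ∑' k, ‖c k‖ₑ ≠ ⊤ := by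
    simpa only [ofReal_norm] using hc.tsum_ofReal_ne_top
  have hTb : ∀ x, ‖T x‖ₑ ≤ (∑' k, ‖c k‖ₑ) * S x := fun x =>
    enorm_tsum_oscTerm_le c φ g fun k => hgS k x
  have hGb : ∀ x, ‖G x‖ₑ ≤ ∑ a ∈ Finset.range (q + 1), A a * N ^ a := fun x =>
    (enorm_sum_le _ _).trans (Finset.sum_le_sum fun a _ => (hfA a x).trans
      (mul_le_mul' le_rfl (pow_le_pow_left' (hSM x) a)))
  have hGbt : ∑ a ∈ Finset.range (q + 1), A a * N ^ a ≠ ⊤ :=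
    ENNReal.sum_ne_top.2 fun a ha => ENNReal.mul_ne_top
      (hAt a (Nat.lt_succ_iff.1 (Finset.mem_range.1 ha))) (ENNReal.pow_ne_top hNt)
  -- the three error contributions
  have e1 : L1Dominated fun x => -Complex.I * W * (G x ^ 2 * (V x - T x)) :=
    (hV.bdd_mul (ENNReal.pow_ne_top (n := 2) hGbt) fun x _ => by
      rw [enorm_pow]
      exact pow_le_pow_left' (hGb x) 2).const_mul _
  have e2 : L1Dominated fun x => -Complex.I * W *
      ∑ a ∈ Finset.range (q + 1), ∑ b ∈ Finset.Ico (q - a) (q + 1), f a x * f b x * T x := by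
    refine (L1Dominated.sum _ fun a ha => L1Dominated.sum _ fun b hb => ?_).const_mul _
    have ha := Finset.mem_range.1 ha
    have hb := Finset.mem_Ico.1 hb
    refine l1Dominated_of_le_pow hSm hNt hSM (p := q + 1) (q := a + b + 1) (by omega) hS
      (C := A a * A b * ∑' k, ‖c k‖ₑ)
      (ENNReal.mul_ne_top (ENNReal.mul_ne_top (hAt a (by omega)) (hAt b (by omega))) hcT)
      fun x _ => ?_
    rw [enorm_mul, enorm_mul]
    calc ‖f a x‖ₑ * ‖f b x‖ₑ * ‖T x‖ₑ
        ≤ (A a * S x ^ a) * (A b * S x ^ b) * ((∑' k, ‖c k‖ₑ) * S x) :=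
          mul_le_mul' (mul_le_mul' (hfA a x) (hfA b x)) (hTb x)
      _ = _ := by ring
  have e3 : L1Dominated fun x => ∑ n ∈ Finset.range q,
      W ^ (n + 1) * riccatiTermError η c φ g g' (n + 1) x :=
    L1Dominated.sum _ fun n hn => (l1Dominated_riccatiTermError hM0 hM hDm hD hDi
      (hW (n + 1) (Finset.mem_range.1 hn))).const_mul _
  refine ⟨G, G', hGd, hGt, L1Dominated.integrableOn ?_ ?_⟩
  · have heq : (fun x => G' x + Complex.I * η * (G x - 1) - Complex.I * V x / η * G x ^ 2)
        = fun x => -Complex.I * W * (G x ^ 2 * (V x - T x)) + -Complex.I * W *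
      (∑ a ∈ Finset.range (q + 1), ∑ b ∈ Finset.Ico (q - a) (q + 1), f a x * f b x * T x)
        + ∑ n ∈ Finset.range q, W ^ (n + 1) * riccatiTermError η c φ g g' (n + 1) x := by
      funext x
      have h1 := sq_sum_range_succ (fun a => f a x) q
      have h2 : G' x + Complex.I * η * (G x - 1)
          = Complex.I * W * (∑ n ∈ Finset.range q, ∑ j ∈ Finset.range (n + 1),
              f j x * f (n - j) x) * T x
            + ∑ n ∈ Finset.range q, W ^ (n + 1) * riccatiTermError η c φ g g' (n + 1) x := by
        rw [hG1]
        simp only [hG', hR', add_sub_cancel_right]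
        rw [Finset.mul_sum, ← Finset.sum_add_distrib, Finset.mul_sum, Finset.sum_mul,
          ← Finset.sum_add_distrib]
        refine Finset.sum_congr rfl fun n _ => ?_
        have h3 : ∑ j ∈ Finset.range (n + 1), f j x * f (n - j) x
            = W ^ n * ∑ j ∈ Finset.range (n + 1), R j x * R (n - j) x := by
          rw [Finset.mul_sum]
          refine Finset.sum_congr rfl fun j hj => ?_
          have hj : j ≤ n := Nat.lt_succ_iff.1 (Finset.mem_range.1 hj)
          conv_rhs => rw [← Nat.add_sub_cancel' hj, pow_add, Nat.add_sub_cancel' hj]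
          simp only [hf]
          ring
        rw [h3, pow_succ]
        ring
      simp only [← Finset.sum_mul]
      have h4 : G x ^ 2 = _ := h1
      have h5 : Complex.I * V x / η * G x ^ 2 = Complex.I * W * G x ^ 2 * (V x - T x)
          + Complex.I * W * T x * G x ^ 2 := by
        rw [div_eq_mul_inv]
        ring
      rw [h2, h5]
      linear_combination (-(Complex.I * W * T x)) * h4
    rw [heq]
    exact (e1.add e2).add e3
  · have hGm : Measurable G :=
      (continuous_iff_continuousAt.2 fun x => (hGd x).continuousAt).measurable
    have hGm' : Measurable G' := by
      have : G' = deriv G := funext fun x => (hGd x).deriv.symm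
      rw [this]
      exact measurable_deriv G
    fun_prop

theorem measurable_indicator_Ioi_of_countable {E : Type*} [NormedAddCommGroup E]
    [MeasurableSpace E] [BorelSpace E] {f : ℝ → E} {S : Set ℝ} (hS : S.Countable)
    (h : ∀ x, 0 < x → x ∉ S → ContinuousAt f x) : Measurable ((Set.Ioi 0).indicator f) := by
  refine measurable_of_countable_not_continuousAt ((hS.insert 0).mono fun x hx => ?_)
  by_contra hn
  simp only [Set.mem_insert_iff, not_or] at hn
  refine hx ?_
  rcases lt_or_gt_of_ne hn.1 with h0 | h0
  · refine (continuousAt_const (y := (0 : E))).congr ?_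
    filter_upwards [eventually_lt_nhds h0] with y hy
    simp [hy.le]
  · refine (h x h0 hn.2).congr ?_
    filter_upwards [eventually_gt_nhds h0] with y hy
    simp [hy]

theorem IsWeakSolutionReal.continuousOn_deriv {V : ℝ → ℝ} {E : ℝ} {u u' : ℝ → ℝ}
    (h : IsWeakSolutionReal V E u u') : ContinuousOn u' (Set.Ioi 0) := by
  intro x hx
  have hx : 0 < x := hx
  have hi := (h.2 (x / 2) (x + 1) (by linarith) (by linarith)).1
  have hc := intervalIntegral.continuousOn_primitive_interval' hi Set.left_mem_uIcc
  rw [Set.uIcc_of_le (by linarith)] at hc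
  have hn : Set.Icc (x / 2) (x + 1) ∈ nhds x := Icc_mem_nhds (by linarith) (by linarith)
  refine ContinuousAt.continuousWithinAt
    ((((hc.continuousAt hn).const_add (u' (x / 2)))).congr ?_)
  filter_upwards [hn] with y hy
  linarith [(h.2 (x / 2) y (by linarith) hy.1).2]

theorem IsWeakSolutionReal.hasDerivAt_deriv {V : ℝ → ℝ} {E : ℝ} {u u' : ℝ → ℝ}
    (h : IsWeakSolutionReal V E u u') {x : ℝ} (hx : 0 < x) (hV : ContinuousAt V x) :
    HasDerivAt u' (V x * u x - E * u x) x := by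
  have hi := (h.2 (x / 2) (x + 1) (by linarith) (by linarith)).1
  have hu : ContinuousAt u x := (h.1 x hx).continuousAt
  have hn : Set.Ioc (x / 2) (x + 1) ∈ nhds x := Ioc_mem_nhds (by linarith) (by linarith)
  have hd := (intervalIntegral.integral_hasDerivAt_right
    (h.2 (x / 2) x (by linarith) (by linarith)).1
    ⟨_, hn, hi.1.aestronglyMeasurable⟩ ((hV.mul hu).sub (hu.const_mul E))).const_add (u' (x / 2))
  refine hd.congr_of_eventuallyEq ?_
  filter_upwards [hn] with y hy
  linarith [(h.2 (x / 2) y (by linarith) hy.1.le).2]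

theorem stmt3 (p : ℕ) (hp : 2 ≤ p) (η : ℝ) (hη : 0 < η)
    (c : ℕ → ℂ) (φ : ℕ → ℝ) (γ : ℕ → ℝ → ℂ)
    (V : ℝ → ℝ)
    (hV : ∀ x ∈ Set.Ioi (0:ℝ),
      (V x : ℂ) = ∑' k, c k * Complex.exp (-Complex.I * (φ k) * x) * γ k x)
    (hBV : ⨆ k, eVariationOn (γ k) (Set.Ioi 0) < ⊤)
    (hLp : ∫⁻ x in Set.Ioi (0:ℝ), (⨆ k, (‖γ k x‖₊ : ℝ≥0∞)) ^ p < ⊤)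
    (hc : Summable fun k => ‖c k‖)
    (hsd : ∀ j : ℕ, 1 ≤ j → j ≤ p - 1 →
      Summable fun m : Fin j → ℕ => ‖∏ i, c (m i)‖ * |hFun j η (padFin j φ m)|)
    (hres : ∀ K J : ℕ, 1 ≤ K → K ≤ J → J ≤ p → ∀ (m : Fin J → ℕ) (ε : Fin J → ℝ),
      (∀ i, ε i = 1 ∨ ε i = -1) → (K : ℝ) * η ≠ ∑ i, ε i * φ (m i))
    (hinv : ∃ star : ℕ → ℕ, Function.Involutive star ∧
      (∀ k, c (star k) = starRingEnd ℂ (c k)) ∧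
      (∀ k, φ (star k) = -φ k) ∧
      (∀ k, ∀ x ∈ Set.Ioi (0:ℝ), γ (star k) x = starRingEnd ℂ (γ k x))) :
    ∀ u u' : ℝ → ℝ, IsWeakSolutionReal V (η ^ 2 / 4) u u' →
      (∃ x ∈ Set.Ioi (0:ℝ), u x ≠ 0) →
      ∃ L : ℝ, 0 < L ∧
        Filter.Tendsto (fun x => u' x ^ 2 + (η ^ 2 / 4) * u x ^ 2)
          Filter.atTop (nhds L) := by
  intro u u' hu hne
  obtain ⟨q, rfl⟩ : ∃ q, p = q + 1 := ⟨p - 1, by omega⟩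
  set M : ℝ := (⨆ k, eVariationOn (γ k) (Set.Ioi 0)).toReal with hMdef
  have hM0 : 0 ≤ M := ENNReal.toReal_nonneg
  have hMv : ∀ k, eVariationOn (γ k) (Set.Ioi 0) ≤ ENNReal.ofReal M := fun k => by
    rw [hMdef, ENNReal.ofReal_toReal hBV.ne]
    exact le_iSup (fun k => eVariationOn (γ k) (Set.Ioi 0)) k
  have hLk : ∀ k, ∫⁻ x in Set.Ioi (0:ℝ), ‖γ k x‖ₑ ^ (q + 1) < ⊤ := fun k =>
    (lintegral_mono fun x => pow_le_pow_left'
      (le_iSup (fun k => (‖γ k x‖₊ : ℝ≥0∞)) k) (q + 1)).trans_lt hLp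
  choose w hw hw0 hwM hwd hwf using fun k =>
    exists_antitone_majorant (γ k) M hM0 (hMv k) (q + 1) (hLk k)
  set S : Set ℝ := ⋃ k, {x | ¬ContinuousAt (w k) x} with hSdef
  have hS : S.Countable := Set.countable_iUnion fun k => (hw k).countable_not_continuousAt
  have hγc : ∀ k x, 0 < x → x ∉ S → ContinuousAt (γ k) x := fun k x hx hxS =>
    continuousAt_of_antitone_majorant (γ k) (w k) (hwd k) x hx (by
      by_contra h
      exact hxS (Set.mem_iUnion.2 ⟨k, h⟩))
  have hγM : ∀ k x, 0 < x → ‖γ k x‖ ≤ M := fun k x hx => (hwf k x hx).trans (hwM k x)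
  set f : ℕ → ℝ → ℂ := fun k => (Set.Ioi 0).indicator (γ k) with hf
  have hfγ : ∀ k x, 0 < x → f k x = γ k x := fun k x hx =>
    Set.indicator_of_mem (Set.mem_Ioi.2 hx) _
  have hfm : ∀ k, Measurable (f k) := fun k =>
    measurable_indicator_Ioi_of_countable hS (hγc k)
  have hfM : ∀ k x, ‖f k x‖ ≤ M := fun k x => by
    rcases lt_or_ge 0 x with hx | hx
    · rw [hfγ k x hx]
      exact hγM k x hx
    · simpa [hf, hx] using hM0
  choose g g' hg hgM hg'M hgf hg'w hgw hgσ using fun k =>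
    exists_smooth_approx (f k) (hfm k) M (hfM k) (w k) (hw k)
      (fun x y hx hxy => by
        rw [hfγ k x hx, hfγ k y (hx.trans_le hxy)]
        exact hwd k x y hx hxy)
      (fun x hx => by
        rw [hfγ k x hx]
        exact hwf k x hx)
  -- the `L^p` envelope of the amplitudes
  set s : ℝ → ℝ≥0∞ := fun x => ⨆ k, ‖f k x‖ₑ with hs
  have hsm : Measurable s := Measurable.iSup fun k => (hfm k).enorm
  set σ : ℝ → ℝ≥0∞ := fun x => min (lmovingAverage (lmovingAverage s) x) (ENNReal.ofReal M)
    with hσ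
  have hσm : Measurable σ :=
    (measurable_lmovingAverage (measurable_lmovingAverage hsm)).min measurable_const
  have hσi : ∫⁻ x in Set.Ioi (0:ℝ), σ x ^ (q + 1) < ⊤ := by
    calc ∫⁻ x in Set.Ioi (0:ℝ), σ x ^ (q + 1)
        ≤ ∫⁻ x in Set.Ioi (0:ℝ), lmovingAverage (lmovingAverage s) x ^ (q + 1) :=
          lintegral_mono fun x => pow_le_pow_left' (min_le_left _ _) _
      _ ≤ ∫⁻ x in Set.Ioi (0:ℝ), lmovingAverage s x ^ (q + 1) :=
          lintegral_lmovingAverage_pow_le (measurable_lmovingAverage hsm) (by omega)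
      _ ≤ ∫⁻ x in Set.Ioi (0:ℝ), s x ^ (q + 1) :=
          lintegral_lmovingAverage_pow_le hsm (by omega)
      _ = ∫⁻ x in Set.Ioi (0:ℝ), (⨆ k, (‖γ k x‖₊ : ℝ≥0∞)) ^ (q + 1) := by
          refine setLIntegral_congr_fun measurableSet_Ioi fun x hx => ?_
          simp only [hs, hfγ _ x hx]
          rfl
      _ < ⊤ := hLp
  have hgσ' : ∀ k x, ‖g k x‖ₑ ≤ σ x := fun k x => by
    refine le_min ((hgσ k x).trans ?_) ?_
    · exact lmovingAverage_mono (lmovingAverage_mono fun y =>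
        le_iSup (fun k => ‖f k y‖ₑ) k) x
    · rw [← ofReal_norm]
      exact ENNReal.ofReal_le_ofReal (hgM k x)
  have hg0 : ∀ k, Filter.Tendsto (g k) Filter.atTop (nhds 0) := fun k => by
    refine squeeze_zero_norm' ?_ (hw0 k)
    filter_upwards [Filter.eventually_gt_atTop 0] with x hx using hgw k x hx
  set D : ℕ → ℝ → ℝ := fun k x => w k x - w k (x + 2) with hD
  have hDm : ∀ k, Measurable (D k) := fun k =>
    (hw k).measurable.sub ((hw k).measurable.comp (measurable_add_const 2))
  have hDi : ∀ k, ∫⁻ x in Set.Ioi (0:ℝ), ENNReal.ofReal (D k x) ≤ ENNReal.ofReal (2 * M) :=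
    fun k => lintegral_antitone_shift_le (w k) (hw k) (hw0 k) M (hwM k)
  -- regularity of the potential
  have hVs : ∀ x, 0 < x → (V x : ℂ) = ∑' k, oscTerm c φ γ k x := hV
  have hoscb : ∀ k x, 0 < x → ‖oscTerm c φ γ k x‖ ≤ ‖c k‖ * M := fun k x hx => by
    rw [norm_oscTerm]
    exact mul_le_mul_of_nonneg_left (hγM k x hx) (norm_nonneg _)
  have hVc : ∀ x, 0 < x → x ∉ S → ContinuousAt V x := fun x hx hxS => by
    have h1 : Filter.Tendsto (fun y => ∑' k, oscTerm c φ γ k y) (nhds x)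
        (nhds (∑' k, oscTerm c φ γ k x)) := by
      refine tendsto_tsum_of_dominated_convergence (hc.mul_right M) (fun k => ?_) ?_
      · have h2 := hγc k x hx hxS
        have h3 : ContinuousAt (oscTerm c φ γ k) x := by
          unfold oscTerm
          fun_prop
        exact h3
      · filter_upwards [eventually_gt_nhds hx] with y hy k using hoscb k y hy
    rw [← hVs x hx] at h1
    have h4 := (Complex.continuous_re.tendsto _).comp h1
    rw [Complex.ofReal_re] at h4
    refine Filter.Tendsto.congr' ?_ h4
    filter_upwards [eventually_gt_nhds hx] with y hy
    rw [Function.comp_apply, ← hVs y hy, Complex.ofReal_re]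
  set V₀ : ℝ → ℝ := (Set.Ioi 0).indicator V with hV₀
  have hVV : ∀ x, 0 < x → V₀ x = V x := fun x hx => Set.indicator_of_mem (Set.mem_Ioi.2 hx) _
  have hVm : Measurable V₀ := measurable_indicator_Ioi_of_countable hS hVc
  have hVb : ∀ x, 0 < x → |V₀ x| ≤ ∑' k, ‖c k‖ * M := fun x hx => by
    rw [hVV x hx, ← Real.norm_eq_abs, ← Complex.norm_real, hVs x hx]
    exact tsum_of_norm_bounded (hc.mul_right M).hasSum fun k => hoscb k x hx
  have hVd : L1Dominated fun x => V₀ x - ∑' k, oscTerm c φ g k x := by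
    obtain ⟨B, hBm, hB, hfB⟩ := L1Dominated.tsum
      (F := fun k x => oscTerm c φ γ k x - oscTerm c φ g k x)
      (fun k x => ‖c k‖ₑ * ENNReal.ofReal (D k x))
      (fun k => (hDm k).ennreal_ofReal.const_mul _)
      (fun k x hx => by
        have e : oscTerm c φ γ k x - oscTerm c φ g k x
            = oscTerm c φ (fun k x => γ k x - g k x) k x := by
          simp only [oscTerm]
          ring
        rw [e, enorm_oscTerm, ← ofReal_norm (γ k x - g k x)]
        refine mul_le_mul' le_rfl (ENNReal.ofReal_le_ofReal ?_)
        rw [norm_sub_rev, ← hfγ k x hx]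
        exact hgf k x hx)
      (by
        refine lt_of_le_of_lt (ENNReal.tsum_le_tsum (g := fun k =>
          ENNReal.ofReal (‖c k‖ * (2 * M))) fun k => ?_) (hc.mul_right _).tsum_ofReal_lt_top
        rw [lintegral_const_mul _ (hDm k).ennreal_ofReal, ENNReal.ofReal_mul (norm_nonneg _),
          ofReal_norm]
        exact mul_le_mul' le_rfl (hDi k))
    refine ⟨B, hBm, hB, fun x hx => ?_⟩
    have hs1 : Summable fun k => oscTerm c φ γ k x :=
      Summable.of_norm_bounded (hc.mul_right M) fun k => hoscb k x hx
    have hs2 : Summable fun k => oscTerm c φ g k x :=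
      Summable.of_norm_bounded (hc.mul_right M) fun k => by
        rw [norm_oscTerm]
        exact mul_le_mul_of_nonneg_left (hgM k x) (norm_nonneg _)
    dsimp only
    rw [hVV x hx, hVs x hx, ← hs1.tsum_sub hs2]
    exact hfB x hx
  obtain ⟨G, G', hG, hG1, hGρ⟩ := exists_approx_riccati (q := q) hη.ne' hM0 hg hgM hg'M hg0 hDm
    hg'w hDi hσm (fun x => min_le_right _ _) hσi hgσ' hc
    (fun j hj => by
      rcases Nat.eq_zero_or_pos j with rfl | hj0
      · exact Summable.of_finite
      · exact hsd j hj0 (by omega))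
    (fun n hn m h => hres 1 (n + 1) le_rfl (by omega) (by omega) m (fun _ => 1)
      (fun _ => Or.inl rfl) (by simpa using sub_eq_zero.1 h))
    hVm hVd
  exact exists_limit_of_approx_riccati V₀ S hS _ η hη G G' u u' hVm hVb hu.1
    hu.continuousOn_deriv
    (fun x hx hxS => by
      rw [hVV x hx]
      exact hu.hasDerivAt_deriv hx (hVc x hx hxS)) hG hG1 hGρ hne
end

section
/- Let J ≥ 1 and 0 ≤ K ≤ J be integers, let τ ≥ 0, and let γ_1,…,γ_J : (0,∞) → ℂ be functions of bounded variation with Var(γ_i,(0,∞)) ≤ τ and lim_{x→∞} γ_i(x) = 0 for each i. Let η, φ_1,…,φ_J be real numbers, set φ = φ_1 + ⋯ + φ_J and Γ(x) = γ_1(x) ⋯ γ_J(x). Let 0 ≤ a < b < ∞ and let θ : [a,b] → ℝ be absolutely continuous. Then | ∫_a^b ( (φ − K η) e^{iK(ηx + 2θ(x))} e^{−iφx} Γ(x) − 2K e^{iK(ηx + 2θ(x))} e^{−iφx} Γ(x) θ'(x) ) dx | ≤ 2 τ^J. -/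
open scoped BigOperators ENNReal
open MeasureTheory

open Set Filter Topology

/-- Post-composition with a Lipschitz function preserves absolute continuity. -/
theorem LipschitzWith.comp_absolutelyContinuousOnInterval {X Y : Type*} [PseudoMetricSpace X]
    [PseudoMetricSpace Y] {C : NNReal} {f : X → Y} (hf : LipschitzWith C f) {u : ℝ → X} {a b : ℝ}
    (hu : AbsolutelyContinuousOnInterval u a b) :
    AbsolutelyContinuousOnInterval (fun x ↦ f (u x)) a b := by
  apply squeeze_zero (fun t ↦ ?_) (fun t ↦ ?_) (by simpa using Tendsto.const_mul (C : ℝ) hu)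
  · exact Finset.sum_nonneg (fun i hi ↦ by positivity)
  · rw [Finset.mul_sum]
    exact Finset.sum_le_sum fun i _ ↦ hf.dist_le_mul _ _

/-- Fundamental theorem of calculus for `f ∘ u` with `f` Lipschitz and differentiable and `u` an
indefinite integral of `p`. -/
theorem integral_comp_mul_eq_sub_of_lipschitz {f f' : ℝ → ℝ} {C : NNReal} (hf : LipschitzWith C f)
    (hf' : ∀ x, HasDerivAt f (f' x) x) {a b c : ℝ} {p : ℝ → ℝ}
    (hp : IntervalIntegrable p volume a b) {x y : ℝ} (hx : x ∈ uIcc a b) (hy : y ∈ uIcc a b) :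
    ∫ t in x..y, f' (c + ∫ s in a..t, p s) * p t =
      f (c + ∫ s in a..y, p s) - f (c + ∫ s in a..x, p s) := by
  have hAC : AbsolutelyContinuousOnInterval (fun t ↦ f (c + ∫ s in a..t, p s)) a b :=
    (LipschitzWith.of_dist_le_mul (f := fun x ↦ f (c + x)) fun x y ↦ by
      simpa using hf.dist_le_mul (c + x) (c + y)).comp_absolutelyContinuousOnInterval
      (hp.absolutelyContinuousOnInterval_intervalIntegral left_mem_uIcc)
  rw [← (hAC.mono (uIcc_subset_uIcc hx hy)).integral_deriv_eq_sub]
  apply intervalIntegral.integral_congr_ae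
  filter_upwards [hp.ae_hasDerivAt_integral] with t ht htxy
  have h := ht (uIcc_subset_uIcc hx hy (uIoc_subset_uIcc htxy)) a left_mem_uIcc
  exact ((hf' _).comp t (h.const_add c)).deriv.symm

theorem IntervalIntegrable.complex_ofReal {f : ℝ → ℝ} {a b : ℝ} {μ : Measure ℝ}
    (hf : IntervalIntegrable f μ a b) : IntervalIntegrable (fun x ↦ (f x : ℂ)) μ a b :=
  ⟨hf.1.ofReal, hf.2.ofReal⟩

/-- Fundamental theorem of calculus for the complex exponential `exp (I * u)` of an indefinite
integral `u` of a real function `p`. -/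
theorem integral_mul_cexp_I_mul_integral {a b c : ℝ} {p : ℝ → ℝ}
    (hp : IntervalIntegrable p volume a b) {x y : ℝ} (hx : x ∈ uIcc a b) (hy : y ∈ uIcc a b) :
    ∫ t in x..y, (p t : ℂ) * Complex.exp (Complex.I * (c + ∫ s in a..t, p s : ℝ)) =
      -Complex.I * Complex.exp (Complex.I * (c + ∫ s in a..y, p s : ℝ)) -
        -Complex.I * Complex.exp (Complex.I * (c + ∫ s in a..x, p s : ℝ)) := by
  have hsub := uIcc_subset_uIcc hx hy
  have hpxy : IntervalIntegrable p volume x y := hp.mono_set hsub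
  have hu : ContinuousOn (fun t ↦ c + ∫ s in a..t, p s) (uIcc x y) :=
    continuousOn_const.add (((hp.absolutelyContinuousOnInterval_intervalIntegral
      left_mem_uIcc).continuousOn).mono hsub)
  have hcos := integral_comp_mul_eq_sub_of_lipschitz (c := c) Real.lipschitzWith_sin
    Real.hasDerivAt_sin hp hx hy
  have hsin := integral_comp_mul_eq_sub_of_lipschitz (c := c) Real.lipschitzWith_cos
    Real.hasDerivAt_cos hp hx hy
  have hci : IntervalIntegrable (fun t ↦ Real.cos (c + ∫ s in a..t, p s) * p t) volume x y :=
    hpxy.continuousOn_mul (Real.continuous_cos.comp_continuousOn hu)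
  have hsi : IntervalIntegrable (fun t ↦ -Real.sin (c + ∫ s in a..t, p s) * p t) volume x y :=
    hpxy.continuousOn_mul (Real.continuous_sin.comp_continuousOn hu).neg
  have hexp (r : ℝ) : Complex.exp (Complex.I * r) = (Real.cos r : ℂ) + Real.sin r * Complex.I := by
    rw [mul_comm, Complex.exp_mul_I, Complex.ofReal_cos, Complex.ofReal_sin]
  have hsplit (t : ℝ) : (p t : ℂ) * Complex.exp (Complex.I * (c + ∫ s in a..t, p s : ℝ)) =
      ((Real.cos (c + ∫ s in a..t, p s) * p t : ℝ) : ℂ) -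
        Complex.I * ((-Real.sin (c + ∫ s in a..t, p s) * p t : ℝ) : ℂ) := by
    rw [hexp]; push_cast; ring
  simp_rw [hsplit]
  rw [intervalIntegral.integral_sub hci.complex_ofReal (hsi.complex_ofReal.const_mul _),
    intervalIntegral.integral_const_mul, intervalIntegral.integral_ofReal,
    intervalIntegral.integral_ofReal, hcos, hsin, hexp, hexp]
  push_cast
  linear_combination (Complex.sin (c + (∫ s in a..y, p s : ℝ)) -
    Complex.sin (c + (∫ s in a..x, p s : ℝ))) * Complex.I_sq

/-- Summation by parts bound for a sequence `w` whose increments are dominated by those of `v`. -/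
theorem norm_sum_sub_mul_le {R : Type*} [NormedRing R] {f w : ℕ → R} {v : ℕ → ℝ}
    (hf : ∀ j, ‖f j‖ ≤ 1) (hw : ∀ j, ‖w (j + 1)‖ ≤ v (j + 1))
    (hwv : ∀ j, ‖w (j + 1) - w (j + 2)‖ ≤ v (j + 1) - v (j + 2)) (n : ℕ) :
    ‖∑ j ∈ Finset.range (n + 1), (f (j + 1) - f j) * w (j + 1)‖ ≤ 2 * v 1 := by
  have hmul (x y : R) (hx : ‖x‖ ≤ 1) : ‖x * y‖ ≤ ‖y‖ :=
    (norm_mul_le x y).trans (mul_le_of_le_one_left (norm_nonneg y) hx)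
  have key : ‖∑ j ∈ Finset.range (n + 1), (f (j + 1) - f j) * w (j + 1) - f (n + 1) * w (n + 1)‖
      ≤ 2 * v 1 - v (n + 1) := by
    induction n with
    | zero =>
      have h : ‖-(f 0 * w 1)‖ ≤ ‖w 1‖ := by rw [norm_neg]; exact hmul _ _ (hf 0)
      have := hw 0
      simp only [zero_add, Finset.sum_range_one, sub_mul] at *
      rw [sub_sub_cancel_left]
      linarith
    | succ n ih =>
      rw [Finset.sum_range_succ]
      have h := hmul _ (w (n + 1) - w (n + 2)) (hf (n + 1))
      have hn := hwv n
      have e : ∑ j ∈ Finset.range (n + 1), (f (j + 1) - f j) * w (j + 1) +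
          (f (n + 1 + 1) - f (n + 1)) * w (n + 1 + 1) - f (n + 1 + 1) * w (n + 1 + 1) =
          (∑ j ∈ Finset.range (n + 1), (f (j + 1) - f j) * w (j + 1) - f (n + 1) * w (n + 1)) +
          f (n + 1) * (w (n + 1) - w (n + 2)) := by
        noncomm_ring
      rw [e]
      refine (norm_add_le _ _).trans ?_
      change _ ≤ 2 * v 1 - v (n + 2)
      linarith
  have h1 := hmul _ (w (n + 1)) (hf (n + 1))
  have h2 := hw n
  have h3 := norm_le_norm_sub_add (∑ j ∈ Finset.range (n + 1), (f (j + 1) - f j) * w (j + 1))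
    (f (n + 1) * w (n + 1))
  linarith

/-- The right endpoint of the interval `(a + k * h, a + (k + 1) * h]` containing `x`. -/
noncomputable def gridCeil (a h x : ℝ) : ℝ := a + h * ⌈(x - a) / h⌉

theorem le_gridCeil {h : ℝ} (hh : 0 < h) (a x : ℝ) : x ≤ gridCeil a h x := by
  have h1 := Int.le_ceil ((x - a) / h)
  rw [div_le_iff₀ hh] at h1
  unfold gridCeil
  linarith

theorem gridCeil_lt_add {h : ℝ} (hh : 0 < h) (a x : ℝ) : gridCeil a h x < x + h := by
  have h1 := mul_lt_mul_of_pos_left (Int.ceil_lt_add_one ((x - a) / h)) hh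
  have h2 : h * ((x - a) / h + 1) = x - a + h := by field_simp
  unfold gridCeil
  linarith

theorem gridCeil_eq_of_mem_Ioc {h : ℝ} (hh : 0 < h) {a x : ℝ} {j : ℕ}
    (hx : x ∈ Ioc (a + h * j) (a + h * (j + 1 : ℕ))) : gridCeil a h x = a + h * (j + 1 : ℕ) := by
  have : ⌈(x - a) / h⌉ = (j + 1 : ℕ) := by
    rw [Int.ceil_eq_iff, lt_div_iff₀ hh, div_le_iff₀ hh]
    have h1 := hx.1
    have h2 := hx.2
    push_cast at h1 h2 ⊢
    constructor <;> linarith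
  rw [gridCeil, this]
  simp

theorem measurable_comp_gridCeil {E : Type*} [MeasurableSpace E] (Γ : ℝ → E) (a h : ℝ) :
    Measurable fun x ↦ Γ (gridCeil a h x) :=
  (measurable_from_top (f := fun k : ℤ ↦ Γ (a + h * k))).comp
    (Int.measurable_ceil.comp ((measurable_id.sub_const a).div_const h))

/-- If the increments of `Γ` are dominated by those of a function `V` on `(a, ∞)`, with `V ≤ M`,
and `g` has a primitive bounded by `1`, then the integral of `g * Γ` is bounded by `2 * M`. -/
theorem norm_integral_mul_le_of_norm_sub_le {a b M : ℝ} (hab : a < b) {F g Γ : ℝ → ℂ} {V : ℝ → ℝ}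
    (hg : IntervalIntegrable g volume a b)
    (hF : ∀ x ∈ Icc a b, ∀ y ∈ Icc a b, ∫ t in x..y, g t = F y - F x)
    (hF1 : ∀ x, ‖F x‖ ≤ 1)
    (hΓV : ∀ x y, a < x → x ≤ y → ‖Γ x - Γ y‖ ≤ V x - V y)
    (hΓ : ∀ x, a < x → ‖Γ x‖ ≤ V x) (hV : ∀ x, a < x → V x ≤ M) :
    ‖∫ x in a..b, g x * Γ x‖ ≤ 2 * M := by
  set h : ℕ → ℝ := fun n ↦ (b - a) / (n + 1 : ℕ) with h_def
  have hh (n : ℕ) : 0 < h n := div_pos (sub_pos.2 hab) (by positivity)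
  have hh0 : Tendsto h atTop (𝓝 0) :=
    (tendsto_const_div_atTop_nhds_zero_nat (b - a)).comp (tendsto_add_atTop_nat 1)
  have hstep (n : ℕ) : ‖∫ x in a..b, g x * Γ (gridCeil a (h n) x)‖ ≤ 2 * M := by
    set z : ℕ → ℝ := fun j ↦ a + h n * j with z_def
    have z0 : z 0 = a := by simp [z]
    have zn : z (n + 1) = b := by
      simp only [z, h]
      field_simp
      ring
    have zmono : StrictMono z := fun i j hij ↦ by
      have := mul_lt_mul_of_pos_left (Nat.cast_lt (α := ℝ).2 hij) (hh n)
      simpa [z] using this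
    have za (j : ℕ) : a < z (j + 1) := z0 ▸ zmono j.succ_pos
    have zmem (j : ℕ) (hj : j ≤ n + 1) : z j ∈ Icc a b :=
      ⟨z0 ▸ zmono.monotone j.zero_le, zn ▸ zmono.monotone hj⟩
    have hcongr (j : ℕ) : ∀ x ∈ uIoc (z j) (z (j + 1)),
        g x * Γ (z (j + 1)) = g x * Γ (gridCeil a (h n) x) := fun x hx ↦ by
      rw [uIoc_of_le (zmono j.lt_succ_self).le] at hx
      rw [gridCeil_eq_of_mem_Ioc (hh n) hx]
    have hint (j : ℕ) (hj : j < n + 1) : IntervalIntegrable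
        (fun x ↦ g x * Γ (gridCeil a (h n) x)) volume (z j) (z (j + 1)) := by
      refine IntervalIntegrable.congr (fun x hx ↦ hcongr j x hx) ?_
      refine (hg.mono_set ?_).mul_const _
      rw [uIcc_of_le hab.le]
      exact uIcc_subset_Icc (zmem j hj.le) (zmem (j + 1) hj)
    have hsum := intervalIntegral.sum_integral_adjacent_intervals hint
    rw [z0, zn] at hsum
    rw [← hsum]
    have hterm : ∀ j ∈ Finset.range (n + 1),
        ∫ x in z j..z (j + 1), g x * Γ (gridCeil a (h n) x) =
          (F (z (j + 1)) - F (z j)) * Γ (z (j + 1)) := fun j hj ↦ by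
      have hj := Finset.mem_range.1 hj
      rw [← hF _ (zmem j hj.le) _ (zmem (j + 1) hj), ← intervalIntegral.integral_mul_const]
      exact intervalIntegral.integral_congr_ae
        (Eventually.of_forall fun x hx ↦ (hcongr j x hx).symm)
    rw [Finset.sum_congr rfl hterm]
    refine (norm_sum_sub_mul_le (f := F ∘ z) (w := Γ ∘ z) (v := V ∘ z) (fun j ↦ hF1 _)
      (fun j ↦ hΓ _ (za j))
      (fun j ↦ hΓV _ _ (za j) (zmono.monotone (Nat.le_succ _))) n).trans ?_
    exact mul_le_mul_of_nonneg_left (hV _ (za 0)) zero_le_two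
  have hVanti : AntitoneOn V (Ioi a) := fun x hx y _ hxy ↦
    sub_nonneg.1 ((norm_nonneg _).trans (hΓV x y hx hxy))
  have hcont : ∀ᵐ x, x ∈ Ioi a → ContinuousWithinAt V (Ioi a) x := by
    filter_upwards [hVanti.countable_not_continuousWithinAt.ae_notMem volume] with x hx hxa
    by_contra hc
    exact hx ⟨hxa, hc⟩
  have hlim : Tendsto (fun n ↦ ∫ x in a..b, g x * Γ (gridCeil a (h n) x)) atTop
      (𝓝 (∫ x in a..b, g x * Γ x)) := by
    refine intervalIntegral.tendsto_integral_filter_of_dominated_convergence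
      (fun x ↦ ‖g x‖ * M) (Eventually.of_forall fun n ↦ ?_) (Eventually.of_forall fun n ↦ ?_)
      (hg.norm.mul_const M) ?_
    · exact (hg.def'.aestronglyMeasurable).mul
        (measurable_comp_gridCeil Γ a (h n)).aestronglyMeasurable
    · refine Eventually.of_forall fun x hx ↦ ?_
      rw [uIoc_of_le hab.le] at hx
      have hax := hx.1.trans_le (le_gridCeil (hh n) a x)
      rw [norm_mul]
      exact mul_le_mul_of_nonneg_left ((hΓ _ hax).trans (hV _ hax)) (norm_nonneg _)
    · filter_upwards [hcont] with x hx hxab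
      rw [uIoc_of_le hab.le] at hxab
      have hgrid : Tendsto (fun n ↦ gridCeil a (h n) x) atTop (𝓝 x) :=
        tendsto_of_tendsto_of_tendsto_of_le_of_le tendsto_const_nhds
          (by simpa using hh0.const_add x) (fun n ↦ le_gridCeil (hh n) a x)
          (fun n ↦ (gridCeil_lt_add (hh n) a x).le)
      have hVlim : Tendsto (fun n ↦ V x - V (gridCeil a (h n) x)) atTop (𝓝 0) := by
        have := (hx hxab.1).tendsto.comp (tendsto_nhdsWithin_iff.2 ⟨hgrid,
          Eventually.of_forall fun n ↦ hxab.1.trans_le (le_gridCeil (hh n) a x)⟩)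
        simpa using this.const_sub (V x)
      refine Tendsto.const_mul _ (tendsto_iff_norm_sub_tendsto_zero.2 ?_)
      refine squeeze_zero (fun _ ↦ norm_nonneg _) (fun n ↦ ?_) hVlim
      rw [norm_sub_rev]
      exact hΓV _ _ hxab.1 (le_gridCeil (hh n) a x)
  exact le_of_tendsto hlim.norm (Eventually.of_forall hstep)

/-- If each factor has increment dominated by that of a majorant, so does the product. -/
theorem norm_prod_sub_prod_le {ι R : Type*} [NormedField R] (s : Finset ι) {x y : ι → R}
    {v w : ι → ℝ} (hx : ∀ i ∈ s, ‖x i‖ ≤ v i) (hy : ∀ i ∈ s, ‖y i‖ ≤ w i)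
    (hxy : ∀ i ∈ s, ‖x i - y i‖ ≤ v i - w i) :
    ‖∏ i ∈ s, x i - ∏ i ∈ s, y i‖ ≤ ∏ i ∈ s, v i - ∏ i ∈ s, w i := by
  classical
  induction s using Finset.induction_on with
  | empty => simp
  | insert i s hi ih =>
    rw [Finset.forall_mem_insert] at hx hy hxy
    rw [Finset.prod_insert hi, Finset.prod_insert hi, Finset.prod_insert hi, Finset.prod_insert hi]
    have hprod : ‖∏ j ∈ s, x j‖ ≤ ∏ j ∈ s, v j := by
      rw [norm_prod]
      exact Finset.prod_le_prod (fun j _ ↦ norm_nonneg _) hx.2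
    have h1 := mul_le_mul hxy.1 hprod (norm_nonneg _) ((norm_nonneg _).trans hxy.1)
    have h2 := mul_le_mul hy.1 (ih hx.2 hy.2 hxy.2) (norm_nonneg _) ((norm_nonneg _).trans hy.1)
    calc _ = ‖(x i - y i) * ∏ j ∈ s, x j + y i * (∏ j ∈ s, x j - ∏ j ∈ s, y j)‖ := by
          congr 1; ring
      _ ≤ _ := by
          refine (norm_add_le _ _).trans ?_
          rw [norm_mul, norm_mul]
          linarith

section Tail

variable {E : Type*} [NormedAddCommGroup E] {γ : ℝ → E}

theorem norm_le_toReal_eVariationOn_Ici {x : ℝ} (hγ : eVariationOn γ (Ici x) ≠ ⊤)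
    (hlim : Tendsto γ atTop (𝓝 0)) : ‖γ x‖ ≤ (eVariationOn γ (Ici x)).toReal := by
  have h : Tendsto (fun y ↦ dist (γ x) (γ y)) atTop (𝓝 ‖γ x‖) := by
    simpa using tendsto_const_nhds.dist hlim
  refine le_of_tendsto h ((eventually_ge_atTop x).mono fun y hy ↦ ?_)
  exact BoundedVariationOn.dist_le hγ self_mem_Ici hy

theorem norm_sub_le_toReal_eVariationOn_Ici_sub {x y : ℝ} (hxy : x ≤ y)
    (hγ : eVariationOn γ (Ici x) ≠ ⊤) :
    ‖γ x - γ y‖ ≤ (eVariationOn γ (Ici x)).toReal - (eVariationOn γ (Ici y)).toReal := by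
  have hadd : edist (γ x) (γ y) + eVariationOn γ (Ici y) ≤ eVariationOn γ (Ici x) := by
    have h1 := eVariationOn.add_le_union γ (s := Icc x y) (t := Ici y)
      fun u hu v hv ↦ hu.2.trans hv
    rw [Icc_union_Ici_eq_Ici hxy] at h1
    exact (add_le_add_left (eVariationOn.edist_le γ (left_mem_Icc.2 hxy)
      (right_mem_Icc.2 hxy)) _).trans h1
  have hy := ne_top_of_le_ne_top hγ (eVariationOn.mono γ (Ici_subset_Ici.2 hxy))
  have h2 := ENNReal.toReal_mono hγ hadd
  rw [ENNReal.toReal_add (edist_ne_top _ _) hy, edist_dist,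
    ENNReal.toReal_ofReal dist_nonneg, dist_eq_norm] at h2
  linarith

end Tail

theorem stmt4 (J K : ℕ) (hJ : 1 ≤ J) (hK : K ≤ J) (τ : ℝ) (hτ : 0 ≤ τ)
    (γ : Fin J → ℝ → ℂ)
    (hvar : ∀ i, eVariationOn (γ i) (Set.Ioi 0) ≤ ENNReal.ofReal τ)
    (hlim : ∀ i, Filter.Tendsto (γ i) Filter.atTop (nhds 0))
    (η : ℝ) (φ : Fin J → ℝ)
    (a b : ℝ) (ha : 0 ≤ a) (hab : a < b)
    (θ θ' : ℝ → ℝ)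
    (hθ'int : IntervalIntegrable θ' volume a b)
    (hθAC : ∀ x ∈ Set.Icc a b, θ x = θ a + ∫ t in a..x, θ' t) :
    ‖∫ x in a..b,
        (((((∑ i, φ i) - K * η : ℝ)) : ℂ) *
            Complex.exp (Complex.I * K * (η * x + 2 * θ x)) *
            Complex.exp (-Complex.I * (∑ i, φ i) * x) * (∏ i, γ i x)
          - 2 * K * Complex.exp (Complex.I * K * (η * x + 2 * θ x)) *
            Complex.exp (-Complex.I * (∑ i, φ i) * x) * (∏ i, γ i x) * θ' x)‖
      ≤ 2 * τ ^ J := by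
  set p : ℝ → ℝ := fun t ↦ K * η - ∑ i, φ i + 2 * K * θ' t with p_def
  have hp : IntervalIntegrable p volume a b :=
    intervalIntegrable_const.add (hθ'int.const_mul _)
  set c : ℝ := (K * η - ∑ i, φ i) * a + 2 * K * θ a with c_def
  set u : ℝ → ℝ := fun t ↦ c + ∫ s in a..t, p s with u_def
  have hu : ∀ x ∈ Icc a b, u x = (K * η - ∑ i, φ i) * x + 2 * K * θ x := fun x hx ↦ by
    have hx' : IntervalIntegrable θ' volume a x :=
      hθ'int.mono_set (by rw [uIcc_of_le hab.le, uIcc_of_le hx.1]; exact Icc_subset_Icc_right hx.2)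
    simp only [u, p, c]
    rw [hθAC x hx, intervalIntegral.integral_add intervalIntegrable_const (hx'.const_mul _),
      intervalIntegral.integral_const, intervalIntegral.integral_const_mul, smul_eq_mul]
    ring
  have hIcc : uIcc a b = Icc a b := uIcc_of_le hab.le
  set g : ℝ → ℂ := fun t ↦ -((p t : ℂ) * Complex.exp (Complex.I * u t)) with g_def
  have hg : IntervalIntegrable g volume a b := by
    have hcont : ContinuousOn u (uIcc a b) := continuousOn_const.add
      (hp.absolutelyContinuousOnInterval_intervalIntegral left_mem_uIcc).continuousOn
    refine (hp.complex_ofReal.mul_continuousOn ?_).neg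
    exact Complex.continuous_exp.comp_continuousOn
      (continuousOn_const.mul (Complex.continuous_ofReal.comp_continuousOn hcont))
  have hF : ∀ x ∈ Icc a b, ∀ y ∈ Icc a b, ∫ t in x..y, g t =
      Complex.I * Complex.exp (Complex.I * u y) - Complex.I * Complex.exp (Complex.I * u x) := by
    intro x hx y hy
    rw [← hIcc] at hx hy
    rw [intervalIntegral.integral_neg, integral_mul_cexp_I_mul_integral hp hx hy]
    ring
  have hfin (i : Fin J) {x : ℝ} (hx : 0 < x) :
      eVariationOn (γ i) (Ici x) ≤ ENNReal.ofReal τ :=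
    (eVariationOn.mono _ (Ici_subset_Ioi.2 hx)).trans (hvar i)
  have htop (i : Fin J) {x : ℝ} (hx : 0 < x) : eVariationOn (γ i) (Ici x) ≠ ⊤ :=
    ne_top_of_le_ne_top ENNReal.ofReal_ne_top (hfin i hx)
  have hbound (i : Fin J) {x : ℝ} (hx : 0 < x) :
      ‖γ i x‖ ≤ (eVariationOn (γ i) (Ici x)).toReal :=
    norm_le_toReal_eVariationOn_Ici (htop i hx) (hlim i)
  have main := norm_integral_mul_le_of_norm_sub_le (M := τ ^ J) hab (Γ := fun x ↦ ∏ i, γ i x)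
    (V := fun x ↦ ∏ i, (eVariationOn (γ i) (Ici x)).toReal) hg hF
    (fun x ↦ by rw [norm_mul, mul_comm Complex.I (u x : ℂ), Complex.norm_exp_ofReal_mul_I]; simp)
    (fun x y hx hxy ↦ norm_prod_sub_prod_le _ (fun i _ ↦ hbound i (ha.trans_lt hx))
      (fun i _ ↦ hbound i (ha.trans_lt (hx.trans_le hxy)))
      (fun i _ ↦ norm_sub_le_toReal_eVariationOn_Ici_sub hxy (htop i (ha.trans_lt hx))))
    (fun x hx ↦ by
      rw [norm_prod]
      exact Finset.prod_le_prod (fun i _ ↦ norm_nonneg _) fun i _ ↦ hbound i (ha.trans_lt hx))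
    (fun x hx ↦ by
      refine (Finset.prod_le_prod (fun i _ ↦ ENNReal.toReal_nonneg) fun i _ ↦
        ENNReal.toReal_le_of_le_ofReal hτ (hfin i (ha.trans_lt hx))).trans_eq ?_
      simp)
  refine le_of_eq_of_le (congrArg _ (intervalIntegral.integral_congr fun x hx ↦ ?_)) main
  rw [hIcc] at hx
  have hexp : Complex.exp (Complex.I * u x) =
      Complex.exp (Complex.I * K * (η * x + 2 * θ x)) *
        Complex.exp (-Complex.I * (∑ i, φ i : ℝ) * x) := by
    rw [← Complex.exp_add, hu x hx]
    congr 1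
    push_cast
    ring
  simp only [g, hexp, p]
  push_cast
  ring
end
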